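/- arXiv:2601.18249 — 2 statements merged into one kernel-verified Lean document; each statement's English description precedes it below -/
import Mathlib

section
/- Let 𝕜 be an algebraically closed field of characteristic zero. Let Ω_1,…,Ω_d ∈ 𝕜[x,y,z] be homogeneous polynomials with isolated singularities whose degrees are pairwise distinct and each at least 5, and let ξ_1,…,ξ_d ∈ 𝕜. Then the Poisson algebra P = P_{Ω_1−ξ_1} ⊗_𝕜 ⋯ ⊗_𝕜 P_{Ω_d−ξ_d} is Dixmier: every injective Poisson 𝕜-algebra endomorphism of P is bijective. -/
open scoped TensorProduct

/-- A Poisson bracket on a commutative algebra `A` over `𝕜`: a bilinear, antisymmetric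
bracket satisfying the Jacobi identity and the Leibniz rule. -/
structure PoissonStructure (𝕜 A : Type*) [CommRing 𝕜] [CommRing A] [Algebra 𝕜 A] where
  bracket : A → A → A
  add_left : ∀ a b c : A, bracket (a + b) c = bracket a c + bracket b c
  smul_left : ∀ (r : 𝕜) (a b : A), bracket (r • a) b = r • bracket a b
  antisymm : ∀ a b : A, bracket a b = - bracket b a
  jacobi : ∀ a b c : A,
    bracket a (bracket b c) + bracket b (bracket c a) + bracket c (bracket a b) = 0
  leibniz : ∀ a b c : A, bracket a (b * c) = bracket a b * c + b * bracket a c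

/-- `f` is a morphism of Poisson algebras. -/
def IsPoissonHom {𝕜 A B : Type*} [CommRing 𝕜] [CommRing A] [CommRing B]
    [Algebra 𝕜 A] [Algebra 𝕜 B]
    (PA : PoissonStructure 𝕜 A) (PB : PoissonStructure 𝕜 B) (f : A →ₐ[𝕜] B) : Prop :=
  ∀ a b : A, f (PA.bracket a b) = PB.bracket (f a) (f b)

/-- A Poisson algebra is Dixmier if every injective Poisson endomorphism is bijective. -/
def IsDixmier (𝕜 A : Type*) [CommRing 𝕜] [CommRing A] [Algebra 𝕜 A]
    (PA : PoissonStructure 𝕜 A) : Prop :=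
  ∀ f : A →ₐ[𝕜] A, IsPoissonHom PA PA f → Function.Injective f → Function.Bijective f

/-- The tensor-product Poisson bracket on `A ⊗[𝕜] B`. -/
def IsTensorBracket {𝕜 A B : Type*} [CommRing 𝕜] [CommRing A] [CommRing B]
    [Algebra 𝕜 A] [Algebra 𝕜 B] (PA : PoissonStructure 𝕜 A) (PB : PoissonStructure 𝕜 B)
    (PT : PoissonStructure 𝕜 (A ⊗[𝕜] B)) : Prop :=
  ∀ (a a' : A) (b b' : B),
    PT.bracket (a ⊗ₜ[𝕜] b) (a' ⊗ₜ[𝕜] b') =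
      PA.bracket a a' ⊗ₜ[𝕜] (b * b') + (a * a') ⊗ₜ[𝕜] PB.bracket b b'

/-- `A` is `R`-Dixmier: every injective Poisson morphism `A → A ⊗ R` has image `A ⊗ 𝕜·1`. -/
def IsRelDixmier (𝕜 A R : Type*) [CommRing 𝕜] [CommRing A] [CommRing R]
    [Algebra 𝕜 A] [Algebra 𝕜 R] (PA : PoissonStructure 𝕜 A)
    (PT : PoissonStructure 𝕜 (A ⊗[𝕜] R)) : Prop :=
  ∀ f : A →ₐ[𝕜] A ⊗[𝕜] R, IsPoissonHom PA PT f → Function.Injective f →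
    Set.range f = Set.range fun a : A => a ⊗ₜ[𝕜] (1 : R)

/-- A Poisson algebra is Poisson simple if its only Poisson ideals are `0` and the whole ring. -/
def IsPoissonSimple {𝕜 A : Type*} [CommRing 𝕜] [CommRing A] [Algebra 𝕜 A]
    (PA : PoissonStructure 𝕜 A) : Prop :=
  ∀ I : Ideal A, (∀ x : A, ∀ y ∈ I, PA.bracket x y ∈ I) → I = ⊥ ∨ I = ⊤

open MvPolynomial in
/-- The Jacobian Poisson bracket with potential `Ω` on `𝕜[x,y,z]`. -/
noncomputable def jacBracket {𝕜 : Type*} [CommRing 𝕜]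
    (Ω f g : MvPolynomial (Fin 3) 𝕜) : MvPolynomial (Fin 3) 𝕜 :=
  Matrix.det (Matrix.of
    ![![pderiv 0 f, pderiv 1 f, pderiv 2 f],
      ![pderiv 0 g, pderiv 1 g, pderiv 2 g],
      ![pderiv 0 Ω, pderiv 1 Ω, pderiv 2 Ω]])

open MvPolynomial in
/-- `Ω` has an isolated singularity at the origin. -/
def HasIsolatedSingularity {𝕜 : Type*} [Field 𝕜] (Ω : MvPolynomial (Fin 3) 𝕜) : Prop :=
  FiniteDimensional 𝕜
    (MvPolynomial (Fin 3) 𝕜 ⧸ Ideal.span {pderiv (0 : Fin 3) Ω, pderiv 1 Ω, pderiv 2 Ω})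

/-- The underlying commutative algebra of `P_{Ω-ξ} = 𝕜[x,y,z]/(Ω-ξ)`. -/
def PQuot (𝕜 : Type*) [CommRing 𝕜] (Ω : MvPolynomial (Fin 3) 𝕜) (ξ : 𝕜) : Type _ :=
  MvPolynomial (Fin 3) 𝕜 ⧸ Ideal.span {Ω - MvPolynomial.C ξ}

noncomputable instance {𝕜 : Type*} [CommRing 𝕜] (Ω : MvPolynomial (Fin 3) 𝕜) (ξ : 𝕜) :
    CommRing (PQuot 𝕜 Ω ξ) :=
  inferInstanceAs (CommRing (MvPolynomial (Fin 3) 𝕜 ⧸ Ideal.span {Ω - MvPolynomial.C ξ}))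

noncomputable instance {𝕜 : Type*} [CommRing 𝕜] (Ω : MvPolynomial (Fin 3) 𝕜) (ξ : 𝕜) :
    Algebra 𝕜 (PQuot 𝕜 Ω ξ) :=
  inferInstanceAs (Algebra 𝕜 (MvPolynomial (Fin 3) 𝕜 ⧸ Ideal.span {Ω - MvPolynomial.C ξ}))

/-- The canonical (surjective) projection `𝕜[x,y,z] → P_{Ω-ξ}`. -/
noncomputable def PQuot.mk {𝕜 : Type*} [CommRing 𝕜] (Ω : MvPolynomial (Fin 3) 𝕜) (ξ : 𝕜)
    (f : MvPolynomial (Fin 3) 𝕜) : PQuot 𝕜 Ω ξ :=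
  Ideal.Quotient.mk (Ideal.span {Ω - MvPolynomial.C ξ}) f

/-- `P` is the Poisson bracket on `P_{Ω-ξ}` induced from the Jacobian bracket on `A_Ω`. -/
def IsInducedBracket {𝕜 : Type*} [CommRing 𝕜] (Ω : MvPolynomial (Fin 3) 𝕜) (ξ : 𝕜)
    (P : PoissonStructure 𝕜 (PQuot 𝕜 Ω ξ)) : Prop :=
  ∀ f g : MvPolynomial (Fin 3) 𝕜,
    P.bracket (PQuot.mk Ω ξ f) (PQuot.mk Ω ξ g) = PQuot.mk Ω ξ (jacBracket Ω f g)

open PiTensorProduct in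
/-- The Poisson bracket on a finite tensor product `⨂[𝕜] i, A i`. -/
def IsPiTensorBracket {𝕜 : Type*} [CommRing 𝕜] {d : ℕ} {A : Fin d → Type*}
    [∀ i, CommRing (A i)] [∀ i, Algebra 𝕜 (A i)]
    (P : ∀ i, PoissonStructure 𝕜 (A i))
    (PT : PoissonStructure 𝕜 (⨂[𝕜] i, A i)) : Prop :=
  ∀ a b : (i : Fin d) → A i,
    PT.bracket (⨂ₜ[𝕜] i, a i) (⨂ₜ[𝕜] i, b i) =
      ∑ i : Fin d,
        ⨂ₜ[𝕜] j, Function.update (fun j => a j * b j) i ((P i).bracket (a i) (b i)) j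

/-- The Poisson-torus bracket associated to a matrix `Λ` on the Laurent polynomial ring
`𝕜[x₁^{±1},…,xₙ^{±1}]`, realized as the group algebra of `ℤⁿ`:
`{x^u, x^v} = (Σ_{i,j} uᵢ λᵢⱼ vⱼ) x^{u+v}`. -/
def IsTorusBracket {𝕜 : Type*} [CommRing 𝕜] (n : ℕ) (Λ : Matrix (Fin n) (Fin n) 𝕜)
    (P : PoissonStructure 𝕜 (AddMonoidAlgebra 𝕜 (Fin n → ℤ))) : Prop :=
  ∀ u v : Fin n → ℤ,
    P.bracket (AddMonoidAlgebra.single u (1 : 𝕜)) (AddMonoidAlgebra.single v (1 : 𝕜)) =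
      (∑ i, ∑ j, (u i : 𝕜) * Λ i j * (v j : 𝕜)) • AddMonoidAlgebra.single (u + v) (1 : 𝕜)

/-- `ν : A → ℤ ∪ {∞}` is a `w`-valuation on the Poisson algebra `A`. -/
structure IsWValuation {𝕜 A : Type*} [CommRing 𝕜] [CommRing A] [Algebra 𝕜 A]
    (P : PoissonStructure 𝕜 A) (w : ℤ) (ν : A → WithTop ℤ) : Prop where
  eq_top_iff : ∀ a : A, ν a = ⊤ ↔ a = 0
  scalar : ∀ c : 𝕜, c ≠ 0 → ν (algebraMap 𝕜 A c) = 0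
  map_mul : ∀ a b : A, ν (a * b) = ν a + ν b
  map_add : ∀ a b : A, min (ν a) (ν b) ≤ ν (a + b)
  map_bracket : ∀ a b : A, ν a + ν b ≤ ν (P.bracket a b) + (w : WithTop ℤ)

/-!
The algebra `P = ⨂ P_{Ωᵢ - ξᵢ}` is the coordinate ring of the product of the fibers `Ωᵢ = ξᵢ`,
which are reduced because the singularities are isolated. So relations can be tested at points,
and an element of degree `m` in the `j`-th block of variables has a representative of smaller
degree as soon as its leading part vanishes on the asymptotic cone, where `Ωⱼ - ξⱼ` is replaced by
`Ωⱼ`.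

Let `f` be an injective Poisson endomorphism and let `y₀, y₁, y₂` be the images of the coordinates
of block `i`. Then `{y_{c+1}, y_{c+2}} = ∂_c Ωᵢ(y)`. If the `y_c` have degree at most `m` in block
`j`, the left side has degree at most `2m + nⱼ - 3`, whereas the part of degree `(nᵢ - 1)m` of the
right side is `∂_c Ωᵢ` of the leading parts. If `nᵢ > nⱼ`, or `i = j` and `m ≥ 2`, the right side
dominates, hence the leading parts form a critical point of `Ωᵢ` and vanish. So the `y_c` do not
involve the blocks `j` with `nⱼ < nᵢ` and have degree at most `1` in block `i`. By descending
induction on `nᵢ`, `f` maps the span of `1` and the coordinates of block `j` onto itself for each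
`j` with `nⱼ > nᵢ`. Hence the `y_c` Poisson commute with block `j`, and this forces them not to
involve it. So `f` maps the span of `1` and the coordinates of block `i` to itself, injectively
and therefore onto.
-/

namespace TensorDixmier

open MvPolynomial PiTensorProduct

/-! ### Weighted degrees -/

section PolynomialValued

variable {τ R S : Type*} [CommRing R] [CommRing S] [Algebra R S]
  {G : MvPolynomial τ R} {n m : ℕ} {f : τ → Polynomial S}

theorem degree_eq_of_mem_support (hG : G.IsHomogeneous n) {s : τ →₀ ℕ} (hs : s ∈ G.support) :
    ∑ i ∈ s.support, s i = n := by
  rw [← Finsupp.degree_apply, Finsupp.degree_eq_weight_one]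
  exact hG (mem_support_iff.1 hs)

theorem natDegree_prod_pow_le (hf : ∀ c, (f c).natDegree ≤ m) (e : τ → ℕ) (T : Finset τ) :
    (∏ i ∈ T, f i ^ e i).natDegree ≤ (∑ i ∈ T, e i) * m := by
  rw [Finset.sum_mul]
  exact (Polynomial.natDegree_prod_le _ _).trans
    (Finset.sum_le_sum fun i _ => Polynomial.natDegree_pow_le_of_le _ (hf i))

theorem coeff_prod_pow (hf : ∀ c, (f c).natDegree ≤ m) (e : τ → ℕ) (T : Finset τ) :
    (∏ i ∈ T, f i ^ e i).coeff ((∑ i ∈ T, e i) * m) = ∏ i ∈ T, (f i).coeff m ^ e i := by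
  classical
  induction T using Finset.induction_on with
  | empty => simp
  | insert a T ha ih =>
    rw [Finset.prod_insert ha, Finset.sum_insert ha, Finset.prod_insert ha, add_mul,
      Polynomial.coeff_mul_add_eq_of_natDegree_le (Polynomial.natDegree_pow_le_of_le _ (hf a))
        (natDegree_prod_pow_le hf e T), ih, Polynomial.coeff_pow_of_natDegree_le (hf a)]

theorem aeval_polynomial_eq_sum (f : τ → Polynomial S) (G : MvPolynomial τ R) :
    aeval f G = ∑ s ∈ G.support, Polynomial.C (algebraMap R S (G.coeff s)) *
      ∏ i ∈ s.support, f i ^ s i := by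
  rw [aeval_def, eval₂_eq, IsScalarTower.algebraMap_eq R S (Polynomial S)]
  rfl

theorem natDegree_aeval_le (hG : G.IsHomogeneous n) (hf : ∀ c, (f c).natDegree ≤ m) :
    (aeval f G).natDegree ≤ n * m := by
  rw [aeval_polynomial_eq_sum]
  refine Polynomial.natDegree_sum_le_of_forall_le _ _ fun s hs => ?_
  rw [← degree_eq_of_mem_support hG hs]
  exact (Polynomial.natDegree_C_mul_le _ _).trans (natDegree_prod_pow_le hf _ _)

theorem coeff_aeval (hG : G.IsHomogeneous n) (hf : ∀ c, (f c).natDegree ≤ m) :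
    (aeval f G).coeff (n * m) = aeval (fun c => (f c).coeff m) G := by
  rw [aeval_polynomial_eq_sum, Polynomial.finsetSum_coeff, aeval_def, eval₂_eq]
  refine Finset.sum_congr rfl fun s hs => ?_
  rw [Polynomial.coeff_C_mul, ← degree_eq_of_mem_support hG hs, coeff_prod_pow hf]

end PolynomialValued

theorem leadingCoeff_dvd_coeff {S : Type*} [CommRing S] [NoZeroDivisors S] {f g : Polynomial S}
    {m : ℕ} (hgf : g ∣ f) (hf : f.natDegree ≤ m) : g.leadingCoeff ∣ f.coeff m := by
  obtain hlt | rfl := hf.lt_or_eq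
  · rw [Polynomial.coeff_eq_zero_of_natDegree_lt hlt]
    exact dvd_zero _
  · exact Polynomial.leadingCoeff_dvd_leadingCoeff hgf

section Weights

variable {σ R : Type*} [CommRing R]

/-- The substitution `Xᵢ ↦ t ^ wᵢ Xᵢ`. Its coefficient of `t ^ m` is the weighted homogeneous
component of weight `m`, so weighted degrees of products and substitutions reduce to degrees of
univariate polynomials. -/
noncomputable def weightScaling (w : σ → ℕ) :
    MvPolynomial σ R →ₐ[R] Polynomial (MvPolynomial σ R) :=
  aeval fun i => Polynomial.X ^ w i * Polynomial.C (X i)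

variable (w : σ → ℕ)

theorem weightScaling_monomial (s : σ →₀ ℕ) (r : R) :
    weightScaling w (monomial s r) =
      Polynomial.monomial (Finsupp.weight w s) (monomial s r) := by
  rw [weightScaling, aeval_monomial, Finsupp.prod]
  simp_rw [mul_pow]
  rw [Finset.prod_mul_distrib, ← Polynomial.C_mul_X_pow_eq_monomial, monomial_eq, map_mul,
    Finsupp.prod, map_prod, Finsupp.weight_apply, Finsupp.sum, ← Finset.prod_pow_eq_pow_sum,
    IsScalarTower.algebraMap_apply R (MvPolynomial σ R), Polynomial.algebraMap_eq, algebraMap_eq]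
  simp_rw [smul_eq_mul, map_pow, mul_comm (_ : ℕ) (w _), pow_mul]
  ring

theorem coeff_weightScaling (m : ℕ) (p : MvPolynomial σ R) :
    (weightScaling w p).coeff m = weightedHomogeneousComponent w m p := by
  classical
  induction p using MvPolynomial.induction_on' with
  | monomial s r =>
    rw [weightScaling_monomial, Polynomial.coeff_monomial, weightedHomogeneousComponent_of_mem
      (isWeightedHomogeneous_monomial w s r rfl)]
    simp only [eq_comm]
  | add p q hp hq => rw [map_add, Polynomial.coeff_add, hp, hq, map_add]

variable {w}

theorem weightedHomogeneousComponent_eq_zero_iff_forall_lt {m : ℕ} {p : MvPolynomial σ R} :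
    (∀ N, m < N → weightedHomogeneousComponent w N p = 0) ↔ weightedTotalDegree w p ≤ m := by
  classical
  refine ⟨fun h => Finset.sup_le fun s hs => ?_,
    fun h N hN => weightedHomogeneousComponent_eq_zero N p (h.trans_lt hN)⟩
  by_contra! hlt
  have hcoeff := congrArg (coeff s) (h _ hlt)
  rw [coeff_weightedHomogeneousComponent, if_pos rfl, coeff_zero] at hcoeff
  exact mem_support_iff.1 hs hcoeff

theorem natDegree_weightScaling (w : σ → ℕ) (p : MvPolynomial σ R) :
    (weightScaling w p).natDegree = weightedTotalDegree w p :=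
  eq_of_forall_ge_iff fun m => by
    simp only [Polynomial.natDegree_le_iff_coeff_eq_zero, coeff_weightScaling,
      weightedHomogeneousComponent_eq_zero_iff_forall_lt]

theorem weightedTotalDegree_le_of_isWeightedHomogeneous {m : ℕ} {p : MvPolynomial σ R}
    (hp : p.IsWeightedHomogeneous w m) : weightedTotalDegree w p ≤ m :=
  Finset.sup_le fun _ hs => (hp (mem_support_iff.1 hs)).le

theorem weightedTotalDegree_add_le {m : ℕ} {p q : MvPolynomial σ R}
    (hp : weightedTotalDegree w p ≤ m) (hq : weightedTotalDegree w q ≤ m) :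
    weightedTotalDegree w (p + q) ≤ m := by
  rw [← natDegree_weightScaling] at *
  rw [map_add]
  exact Polynomial.natDegree_add_le_of_degree_le hp hq

theorem weightedTotalDegree_sub_le {m : ℕ} {p q : MvPolynomial σ R}
    (hp : weightedTotalDegree w p ≤ m) (hq : weightedTotalDegree w q ≤ m) :
    weightedTotalDegree w (p - q) ≤ m := by
  rw [← natDegree_weightScaling] at *
  rw [map_sub]
  exact (Polynomial.natDegree_sub_le_of_le hp hq).trans_eq (max_self m)

theorem weightedTotalDegree_sum_le {ι : Type*} (s : Finset ι) {f : ι → MvPolynomial σ R} {m : ℕ}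
    (hf : ∀ i ∈ s, weightedTotalDegree w (f i) ≤ m) :
    weightedTotalDegree w (∑ i ∈ s, f i) ≤ m := by
  simp_rw [← natDegree_weightScaling] at *
  rw [map_sum]
  exact Polynomial.natDegree_sum_le_of_forall_le _ _ hf

theorem weightedTotalDegree_mul_le {a b : ℕ} {p q : MvPolynomial σ R}
    (hp : weightedTotalDegree w p ≤ a) (hq : weightedTotalDegree w q ≤ b) :
    weightedTotalDegree w (p * q) ≤ a + b := by
  rw [← natDegree_weightScaling] at *
  rw [map_mul]
  exact Polynomial.natDegree_mul_le_of_le hp hq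

theorem weightedHomogeneousComponent_dvd [IsDomain R] {m : ℕ} {f g : MvPolynomial σ R}
    (hgf : g ∣ f) (hf : weightedTotalDegree w f ≤ m) :
    weightedHomogeneousComponent w (weightedTotalDegree w g) g ∣
      weightedHomogeneousComponent w m f := by
  rw [← natDegree_weightScaling] at *
  rw [← coeff_weightScaling, ← coeff_weightScaling]
  exact leadingCoeff_dvd_coeff (map_dvd _ hgf) hf

section Substitution

variable {τ : Type*} {G : MvPolynomial τ R} {n m : ℕ} {q : τ → MvPolynomial σ R}

theorem weightScaling_aeval (q : τ → MvPolynomial σ R) (G : MvPolynomial τ R) :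
    weightScaling w (aeval q G) = aeval (fun c => weightScaling w (q c)) G :=
  DFunLike.congr_fun (comp_aeval q (weightScaling w)) G

theorem weightedTotalDegree_aeval_le (hG : G.IsHomogeneous n)
    (hq : ∀ c, weightedTotalDegree w (q c) ≤ m) : weightedTotalDegree w (aeval q G) ≤ n * m := by
  simp_rw [← natDegree_weightScaling] at *
  rw [weightScaling_aeval]
  exact natDegree_aeval_le hG hq

theorem weightedHomogeneousComponent_aeval (hG : G.IsHomogeneous n)
    (hq : ∀ c, weightedTotalDegree w (q c) ≤ m) :
    weightedHomogeneousComponent w (n * m) (aeval q G) =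
      aeval (fun c => weightedHomogeneousComponent w m (q c)) G := by
  simp_rw [← natDegree_weightScaling] at hq
  simp_rw [← coeff_weightScaling, weightScaling_aeval]
  exact coeff_aeval hG hq

end Substitution

theorem weightedHomogeneousComponent_pderiv (i : σ) (m : ℕ) (p : MvPolynomial σ R) :
    weightedHomogeneousComponent w m (pderiv i p) =
      pderiv i (weightedHomogeneousComponent w (m + w i) p) := by
  classical
  induction p using MvPolynomial.induction_on' with
  | add p q hp hq => rw [map_add, map_add, hp, hq, map_add, map_add]
  | monomial s r =>
    rw [weightedHomogeneousComponent_of_mem (isWeightedHomogeneous_monomial w s r rfl)]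
    obtain hs | hs := Nat.eq_zero_or_pos (s i)
    · split_ifs <;> simp [pderiv_monomial, hs]
    · have hweight : Finsupp.weight w s = Finsupp.weight w (s - Finsupp.single i 1) + w i := by
        rw [← one_nsmul (w i), ← Finsupp.weight_single, ← map_add,
          tsub_add_cancel_of_le (Finsupp.single_le_iff.2 hs)]
      rw [pderiv_monomial, weightedHomogeneousComponent_of_mem
        (isWeightedHomogeneous_monomial w _ _ rfl), hweight]
      simp only [add_left_inj]
      split_ifs <;> simp [pderiv_monomial]

theorem weightedTotalDegree_pderiv_le (i : σ) {m : ℕ} {p : MvPolynomial σ R}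
    (hp : weightedTotalDegree w p ≤ m) : weightedTotalDegree w (pderiv i p) ≤ m - w i := by
  rw [← weightedHomogeneousComponent_eq_zero_iff_forall_lt] at hp ⊢
  intro N hN
  rw [weightedHomogeneousComponent_pderiv, hp _ (by omega), map_zero]

theorem weightedTotalDegree_sub_weightedHomogeneousComponent_le {m : ℕ} {p : MvPolynomial σ R}
    (hp : weightedTotalDegree w p ≤ m + 1) :
    weightedTotalDegree w (p - weightedHomogeneousComponent w (m + 1) p) ≤ m := by
  rw [← weightedHomogeneousComponent_eq_zero_iff_forall_lt] at hp ⊢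
  intro N hN
  rw [map_sub]
  obtain rfl | hN := (Nat.succ_le_of_lt hN).eq_or_lt
  · rw [Nat.succ_eq_add_one, (weightedHomogeneousComponent_isWeightedHomogeneous
      (m + 1) p).weightedHomogeneousComponent_same, sub_self]
  · rw [hp N hN, (weightedHomogeneousComponent_isWeightedHomogeneous
      (m + 1) p).weightedHomogeneousComponent_ne N hN.ne', sub_zero]

theorem weightScaling_eq {e : ℕ} {G : MvPolynomial σ R} (hG : G.IsWeightedHomogeneous w e) :
    weightScaling w G = Polynomial.C G * Polynomial.X ^ e := by
  classical
  ext1 m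
  rw [coeff_weightScaling, weightedHomogeneousComponent_of_mem hG, Polynomial.coeff_C_mul_X_pow]

theorem weightedHomogeneousComponent_mul_of_isWeightedHomogeneous {e : ℕ} {G : MvPolynomial σ R}
    (hG : G.IsWeightedHomogeneous w e) (N : ℕ) (a : MvPolynomial σ R) :
    weightedHomogeneousComponent w N (a * G) =
      if e ≤ N then weightedHomogeneousComponent w (N - e) a * G else 0 := by
  simp_rw [← coeff_weightScaling, map_mul, weightScaling_eq hG, ← mul_assoc,
    Polynomial.coeff_mul_X_pow', Polynomial.coeff_mul_C]

theorem exists_weightedTotalDegree_component_mul_sub_le {F G : MvPolynomial σ R} {e : ℕ}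
    (hG : G.IsWeightedHomogeneous w e)
    (hFG : ∀ N, e ≤ N → weightedHomogeneousComponent w N (F - G) = 0)
    (m : ℕ) (a : MvPolynomial σ R) :
    ∃ b, weightedTotalDegree w (weightedHomogeneousComponent w (m + 1) (a * G) - b * F) ≤ m := by
  rw [weightedHomogeneousComponent_mul_of_isWeightedHomogeneous hG]
  split_ifs with he
  · set b := weightedHomogeneousComponent w (m + 1 - e) a
    have hb : b.IsWeightedHomogeneous w (m + 1 - e) :=
      weightedHomogeneousComponent_isWeightedHomogeneous _ _
    refine ⟨b, weightedHomogeneousComponent_eq_zero_iff_forall_lt.1 fun N hN => ?_⟩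
    rw [show b * G - b * F = -((F - G) * b) by ring, map_neg,
      weightedHomogeneousComponent_mul_of_isWeightedHomogeneous hb,
      hFG (N - (m + 1 - e)) (by omega), zero_mul, ite_self, neg_zero]
  · exact ⟨0, by simp [weightedTotalDegree_zero]⟩

theorem exists_mem_span_weightedTotalDegree_sub_le {ι : Type*} [Finite ι]
    {F G : ι → MvPolynomial σ R} {e : ι → ℕ} (hG : ∀ l, (G l).IsWeightedHomogeneous w (e l))
    (hFG : ∀ l N, e l ≤ N → weightedHomogeneousComponent w N (F l - G l) = 0) {m : ℕ}
    {u : MvPolynomial σ R} (hu : u.IsWeightedHomogeneous w (m + 1))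
    (hmem : u ∈ Ideal.span (Set.range G)) :
    ∃ v ∈ Ideal.span (Set.range F), weightedTotalDegree w (u - v) ≤ m := by
  cases nonempty_fintype ι
  obtain ⟨a, rfl⟩ := Ideal.mem_span_range_iff_exists_fun.1 hmem
  choose b hb using fun l =>
    exists_weightedTotalDegree_component_mul_sub_le (hG l) (hFG l) m (a l)
  refine ⟨∑ l, b l * F l, Ideal.sum_mem _ fun l _ => Ideal.mul_mem_left _ _
    (Ideal.subset_span ⟨l, rfl⟩), ?_⟩
  rw [← hu.weightedHomogeneousComponent_same, map_sum, ← Finset.sum_sub_distrib]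
  exact weightedTotalDegree_sum_le _ fun l _ => hb l

end Weights

/-! ### Isolated singularities -/

section FiniteDimensionalQuotient

variable {σ k : Type*} [Field k] [Infinite k]

theorem eq_zero_of_forall_smul_mem_zeroLocus (I : Ideal (MvPolynomial σ k))
    [FiniteDimensional k (MvPolynomial σ k ⧸ I)] {b : σ → k}
    (hb : ∀ t : k, t • b ∈ zeroLocus k I) : b = 0 := by
  by_contra hb0
  obtain ⟨c, hc⟩ := Function.ne_iff.1 hb0
  obtain ⟨g, hmonic, hg⟩ : IsIntegral k (Ideal.Quotient.mkₐ k I (X c)) :=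
    Algebra.IsIntegral.isIntegral _
  have hmem : Polynomial.aeval (X c : MvPolynomial σ k) g ∈ I := by
    rw [← Ideal.Quotient.eq_zero_iff_mem, ← Ideal.Quotient.mkₐ_eq_mk k,
      ← Polynomial.aeval_algHom_apply]
    exact hg
  refine hmonic.ne_zero (Polynomial.funext fun r => ?_)
  have hroot := hb (r / b c) _ hmem
  rwa [← Polynomial.aeval_algHom_apply, aeval_X, Pi.smul_apply, smul_eq_mul,
    div_mul_cancel₀ _ hc, Polynomial.coe_aeval_eq_eval, ← Polynomial.eval_zero (x := r)] at hroot

end FiniteDimensionalQuotient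

section Homogeneous

variable {σ k : Type*} [Field k] {Ω : MvPolynomial σ k} {n : ℕ}

theorem eval_smul (hΩ : Ω.IsHomogeneous n) (t : k) (b : σ → k) :
    eval (t • b) Ω = t ^ n * eval b Ω := by
  rw [eval_eq, eval_eq, Finset.mul_sum]
  refine Finset.sum_congr rfl fun s hs => ?_
  simp_rw [Pi.smul_apply, smul_eq_mul, mul_pow]
  rw [Finset.prod_mul_distrib, Finset.prod_pow_eq_pow_sum, degree_eq_of_mem_support hΩ hs,
    mul_left_comm]

theorem exists_eval_eq [IsAlgClosed k] (hΩ : Ω.IsHomogeneous n) (hΩ0 : Ω ≠ 0) (hn : n ≠ 0)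
    (ξ : k) : ∃ a : σ → k, eval a Ω = ξ := by
  obtain ⟨b, hb⟩ : ∃ b, eval b Ω ≠ 0 := by
    by_contra! h
    exact hΩ0 (MvPolynomial.funext fun b => by rw [h, map_zero])
  obtain ⟨t, ht⟩ := IsAlgClosed.exists_pow_nat_eq (ξ / eval b Ω) (Nat.pos_of_ne_zero hn)
  exact ⟨t • b, by rw [eval_smul hΩ, ht, div_mul_cancel₀ _ hb]⟩

theorem totalDegree_sub_C (hΩ : Ω.IsHomogeneous n) (hΩ0 : Ω ≠ 0) (hn : n ≠ 0) (ξ : k) :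
    (Ω - C ξ).totalDegree = n := by
  rw [sub_eq_add_neg, totalDegree_add_eq_left_of_totalDegree_lt] <;>
  rw [hΩ.totalDegree hΩ0]
  rw [totalDegree_neg, totalDegree_C]
  exact Nat.pos_of_ne_zero hn

theorem dvd_homogeneousComponent (hΩ : Ω.IsHomogeneous n) (hΩ0 : Ω ≠ 0) (hn : n ≠ 0) {ξ : k}
    {m : ℕ} {p : MvPolynomial σ k} (hp : p ∈ Ideal.span {Ω - C ξ}) (hdeg : p.totalDegree ≤ m) :
    Ω ∣ homogeneousComponent m p := by
  have hdvd : homogeneousComponent (Ω - C ξ).totalDegree (Ω - C ξ) ∣ homogeneousComponent m p := by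
    rw [← weightedTotalDegree_one] at *
    exact weightedHomogeneousComponent_dvd (Ideal.mem_span_singleton.1 hp) hdeg
  rwa [totalDegree_sub_C hΩ hΩ0 hn, map_sub, homogeneousComponent_of_mem hΩ, if_pos rfl,
    homogeneousComponent_eq_zero _ _ (by rw [totalDegree_C]; exact Nat.pos_of_ne_zero hn),
    sub_zero] at hdvd

end Homogeneous

section IsolatedSingularity

variable {k : Type*} [Field k] {Ω : MvPolynomial (Fin 3) k} {n : ℕ}

theorem eq_zero_of_eval_pderiv_eq_zero [Infinite k] (hΩ : Ω.IsHomogeneous n)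
    (hiso : HasIsolatedSingularity Ω) {b : Fin 3 → k} (hb : ∀ c, eval b (pderiv c Ω) = 0) :
    b = 0 := by
  have : FiniteDimensional k _ := hiso
  refine eq_zero_of_forall_smul_mem_zeroLocus
    (Ideal.span {pderiv (0 : Fin 3) Ω, pderiv 1 Ω, pderiv 2 Ω}) fun t => ?_
  have hzero : ∀ c, aeval (t • b) (pderiv c Ω) = 0 := fun c => by
    rw [aeval_eq_eval, eval_smul hΩ.pderiv, hb, mul_zero]
  rw [zeroLocus_span]
  rintro _ (rfl | rfl | rfl) <;> exact hzero _

theorem potential_ne_zero [Infinite k] (hiso : HasIsolatedSingularity Ω) : Ω ≠ 0 := by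
  rintro rfl
  exact one_ne_zero
    (eq_zero_of_eval_pderiv_eq_zero (b := 1) (isHomogeneous_zero _ _ 0) hiso (by simp))

theorem isUnit_of_forall_eval_eq_zero {σ : Type*} [Finite σ] [Nontrivial σ] [IsAlgClosed k]
    {q : MvPolynomial σ k} (hq : ∀ x, eval x q = 0 → x = 0) : IsUnit q := by
  have hpow : ∀ c, ∃ N : ℕ, q ∣ X c ^ N := fun c => by
    simp_rw [← Ideal.mem_span_singleton, ← Ideal.mem_radical_iff,
      ← vanishingIdeal_zeroLocus_eq_radical (K := k)]
    intro x hx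
    rw [aeval_X, hq x (hx q (Ideal.mem_span_singleton_self q)), Pi.zero_apply]
  obtain ⟨i, j, hij⟩ := exists_pair_ne σ
  obtain ⟨N, hN⟩ := hpow i
  obtain ⟨M, hM⟩ := hpow j
  have hrel : IsRelPrime (X i : MvPolynomial σ k) (X j) := by
    rwa [X_prime.irreducible.isRelPrime_iff_not_dvd, X_dvd_X]
  exact hrel.pow hN hM

theorem dvd_derivation_of_mul_self_dvd {R A : Type*} [CommRing R] [CommRing A] [Algebra R A]
    (D : Derivation R A A) {f q : A} (hq : q * q ∣ f) : q ∣ D f := by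
  obtain ⟨r, rfl⟩ := hq
  rw [D.leibniz, D.leibniz, smul_eq_mul, smul_eq_mul, smul_eq_mul, mul_assoc]
  exact dvd_add (dvd_mul_right _ _) ((dvd_add (dvd_mul_right _ _) (dvd_mul_right _ _)).mul_left _)

theorem squarefree_sub_C [IsAlgClosed k] (hΩ : Ω.IsHomogeneous n)
    (hiso : HasIsolatedSingularity Ω) (ξ : k) : Squarefree (Ω - C ξ) := by
  refine fun q hq => isUnit_of_forall_eval_eq_zero fun x hx =>
    eq_zero_of_eval_pderiv_eq_zero hΩ hiso fun c => ?_
  obtain ⟨s, hs⟩ := dvd_derivation_of_mul_self_dvd (pderiv c) hq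
  rw [map_sub, pderiv_C, sub_zero] at hs
  rw [hs, map_mul, hx, zero_mul]

theorem mem_span_sub_C_iff [IsAlgClosed k] (hΩ : Ω.IsHomogeneous n)
    (hiso : HasIsolatedSingularity Ω) (ξ : k) {p : MvPolynomial (Fin 3) k} :
    p ∈ Ideal.span {Ω - C ξ} ↔ ∀ a, eval a Ω = ξ → eval a p = 0 := by
  rw [← (isRadical_iff_span_singleton.1 (squarefree_sub_C hΩ hiso ξ).isRadical).radical,
    ← vanishingIdeal_zeroLocus_eq_radical (K := k), zeroLocus_span, mem_vanishingIdeal_iff]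
  simp [aeval_eq_eval, sub_eq_zero]

end IsolatedSingularity

/-! ### Tensor products of algebras presented by polynomials -/

section Separation

variable {k ι : Type*} [Field k] [Finite ι] {V : ι → Type*} [∀ i, AddCommGroup (V i)]
  [∀ i, Module k (V i)]

theorem exists_dualDistrib_update_eq [DecidableEq ι] (φ : ∀ i, Module.Dual k (V i)) (a : ι)
    (x : ⨂[k] i, V i) :
    ∃ y : V a, ∀ ψ, dualDistrib (tprod k (Function.update φ a ψ)) x = ψ y := by
  cases nonempty_fintype ι
  induction x using PiTensorProduct.induction_on with
  | smul_tprod r x =>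
    refine ⟨(r * ∏ i ∈ Finset.univ.erase a, φ i (x i)) • x a, fun ψ => ?_⟩
    have hprod : ∏ i ∈ Finset.univ.erase a, Function.update φ a ψ i (x i) =
        ∏ i ∈ Finset.univ.erase a, φ i (x i) := Finset.prod_congr rfl fun i hi => by
      rw [Function.update_of_ne (Finset.ne_of_mem_erase hi)]
    rw [map_smul, dualDistrib_apply, ← Finset.mul_prod_erase _ _ (Finset.mem_univ a), hprod,
      Function.update_self, map_smul, smul_eq_mul, smul_eq_mul, mul_comm (ψ _), mul_assoc]
  | add x y hx hy =>
    obtain ⟨u, hu⟩ := hx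
    obtain ⟨v, hv⟩ := hy
    exact ⟨u + v, fun ψ => by rw [map_add, map_add, hu, hv]⟩

theorem coord_piTensorProduct {κ : ι → Type*} (b : ∀ i, Module.Basis (κ i) k (V i))
    (p : ∀ i, κ i) :
    (Basis.piTensorProduct b).coord p = dualDistrib (⨂ₜ[k] i, (b i).coord (p i)) := by
  cases nonempty_fintype ι
  exact PiTensorProduct.ext (MultilinearMap.ext fun y => by
    simp [Basis.piTensorProduct_repr_tprod_apply])

theorem dualDistrib_eq_zero_of_separating {W : ∀ i, Set (Module.Dual k (V i))}
    (hW : ∀ i x, (∀ φ ∈ W i, φ x = 0) → x = 0) {x : ⨂[k] i, V i}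
    (hx : ∀ φ : ∀ i, Module.Dual k (V i), (∀ i, φ i ∈ W i) → dualDistrib (tprod k φ) x = 0)
    (φ : ∀ i, Module.Dual k (V i)) : dualDistrib (tprod k φ) x = 0 := by
  classical
  cases nonempty_fintype ι
  suffices ∀ (s : Finset ι) (φ : ∀ i, Module.Dual k (V i)), (∀ i ∉ s, φ i ∈ W i) →
      dualDistrib (tprod k φ) x = 0 from this Finset.univ φ (by simp)
  intro s
  induction s using Finset.induction_on with
  | empty => exact fun φ hφ => hx φ fun i => hφ i (Finset.notMem_empty i)
  | insert a s ha ih =>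
    intro φ hφ
    obtain ⟨y, hy⟩ := exists_dualDistrib_update_eq φ a x
    have hy0 : y = 0 := hW a y fun ψ hψ => by
      rw [← hy]
      refine ih _ fun i hi => ?_
      obtain rfl | hia := eq_or_ne i a
      · rwa [Function.update_self]
      · rw [Function.update_of_ne hia]
        exact hφ i (by simp [hia, hi])
    rw [← Function.update_eq_self a φ, hy, hy0, map_zero]

theorem eq_zero_of_forall_dualDistrib_eq_zero {W : ∀ i, Set (Module.Dual k (V i))}
    (hW : ∀ i x, (∀ φ ∈ W i, φ x = 0) → x = 0) {x : ⨂[k] i, V i}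
    (hx : ∀ φ : ∀ i, Module.Dual k (V i), (∀ i, φ i ∈ W i) → dualDistrib (tprod k φ) x = 0) :
    x = 0 :=
  (Basis.piTensorProduct fun i => Module.Basis.ofVectorSpace k (V i)).ext_elem fun p => by
    rw [map_zero, Finsupp.zero_apply, ← Module.Basis.coord_apply, coord_piTensorProduct,
      dualDistrib_eq_zero_of_separating hW hx]

end Separation

section ProductOfAlgHoms

variable {k ι : Type*} [CommRing k] [Fintype ι] {A : ι → Type*} [∀ i, CommRing (A i)]
  [∀ i, Algebra k (A i)] {B : Type*} [CommRing B] [Algebra k B]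

/-- The algebra homomorphism `⨂ aᵢ ↦ ∏ ψᵢ(aᵢ)` to a commutative algebra, which exhibits
`⨂ Aᵢ` as the coproduct of the `Aᵢ`. -/
noncomputable def tensorLift (ψ : ∀ i, A i →ₐ[k] B) : (⨂[k] i, A i) →ₐ[k] B :=
  liftAlgHom ((MultilinearMap.mkPiAlgebra k ι B).compLinearMap fun i => (ψ i).toLinearMap)
    (by simp) (by simp [Finset.prod_mul_distrib])

theorem tensorLift_tprod (ψ : ∀ i, A i →ₐ[k] B) (a : ∀ i, A i) :
    tensorLift ψ (tprod k a) = ∏ i, ψ i (a i) :=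
  (lift.tprod _).trans (by simp)

theorem dualDistrib_tprod_toLinearMap (ψ : ∀ i, A i →ₐ[k] k) :
    dualDistrib (⨂ₜ[k] i, (ψ i).toLinearMap) = (tensorLift ψ).toLinearMap :=
  PiTensorProduct.ext (MultilinearMap.ext fun a => by simp [tensorLift_tprod])

variable [DecidableEq ι]

theorem tensorLift_singleAlgHom (ψ : ∀ i, A i →ₐ[k] B) (i : ι) (a : A i) :
    tensorLift ψ (singleAlgHom i a) = ψ i a := by
  rw [singleAlgHom_apply, tensorLift_tprod, Finset.prod_eq_single i]
  · rw [MonoidHom.mulSingle_apply, Pi.mulSingle_eq_same]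
  · intro j _ hj
    rw [MonoidHom.mulSingle_apply, Pi.mulSingle_eq_of_ne hj, map_one]
  · exact fun hi => absurd (Finset.mem_univ i) hi

theorem tprod_eq_prod_singleAlgHom (a : ∀ i, A i) :
    tprod k a = ∏ i, singleAlgHom (R := k) i (a i) := by
  simp_rw [singleAlgHom_apply, ← tprod_prod]
  exact congrArg _ (Finset.univ_prod_mulSingle a).symm

end ProductOfAlgHoms

section BlockPresentation

variable {k ι τ : Type*} [CommRing k]

/-- The inclusion of the `i`-th block of variables. -/
noncomputable abbrev inBlock (i : ι) : MvPolynomial τ k →ₐ[k] MvPolynomial (ι × τ) k :=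
  rename (Prod.mk i)

theorem eval_inBlock (a : ι → τ → k) (i : ι) (p : MvPolynomial τ k) :
    eval (Function.uncurry a) (inBlock i p) = eval (a i) p :=
  eval_rename _ _ _

/-- The ideal generated by one polynomial `Fᵢ` in each block of variables; the quotient by it is
`⨂ k[τ]/(Fᵢ)`. -/
noncomputable def blockIdeal (F : ι → MvPolynomial τ k) : Ideal (MvPolynomial (ι × τ) k) :=
  Ideal.span (Set.range fun i => inBlock i (F i))

theorem inBlock_mem_blockIdeal {F : ι → MvPolynomial τ k} {i : ι} {p : MvPolynomial τ k}
    (hp : p ∈ Ideal.span {F i}) : inBlock i p ∈ blockIdeal F := by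
  obtain ⟨q, rfl⟩ := Ideal.mem_span_singleton.1 hp
  rw [map_mul]
  exact Ideal.mul_mem_right _ _ (Ideal.subset_span ⟨i, rfl⟩)

variable [DecidableEq ι] {A : ι → Type*} [∀ i, CommRing (A i)]
  [∀ i, Algebra k (A i)] (π : ∀ i, MvPolynomial τ k →ₐ[k] A i)

/-- The presentation of `⨂ Aᵢ` by polynomials in blocks of variables which is induced by
presentations `πᵢ` of the factors. -/
noncomputable def tensorPresentation : MvPolynomial (ι × τ) k →ₐ[k] ⨂[k] i, A i :=
  aeval fun v => singleAlgHom v.1 (π v.1 (X v.2))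

theorem tensorPresentation_X (v : ι × τ) :
    tensorPresentation π (X v) = singleAlgHom v.1 (π v.1 (X v.2)) :=
  aeval_X _ _

theorem tensorPresentation_inBlock (i : ι) (p : MvPolynomial τ k) :
    tensorPresentation π (inBlock i p) = singleAlgHom i (π i p) := by
  have hcomp : (tensorPresentation π).comp (inBlock i) = (singleAlgHom i).comp (π i) :=
    MvPolynomial.algHom_ext fun c => by simp [tensorPresentation_X]
  exact DFunLike.congr_fun hcomp p

variable {π}

theorem tensorPresentation_surjective [Finite ι] (hπ : ∀ i, Function.Surjective (π i)) :
    Function.Surjective (tensorPresentation π) := by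
  cases nonempty_fintype ι
  rw [← AlgHom.range_eq_top, eq_top_iff]
  rintro x -
  induction x using PiTensorProduct.induction_on with
  | smul_tprod r a =>
    choose p hp using fun i => hπ i (a i)
    refine Subalgebra.smul_mem _ ?_ r
    rw [tprod_eq_prod_singleAlgHom]
    exact Subalgebra.prod_mem _ fun i _ =>
      ⟨inBlock i (p i), by rw [← hp i]; exact tensorPresentation_inBlock π i (p i)⟩
  | add x y hx hy => exact Subalgebra.add_mem _ hx hy

theorem tensorLift_tensorPresentation [Fintype ι] {B : Type*} [CommRing B] [Algebra k B]
    {ψ : ∀ i, A i →ₐ[k] B} {g : MvPolynomial (ι × τ) k →ₐ[k] B}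
    (hψ : ∀ i p, ψ i (π i p) = g (inBlock i p)) (p : MvPolynomial (ι × τ) k) :
    tensorLift ψ (tensorPresentation π p) = g p := by
  have hcomp : (tensorLift ψ).comp (tensorPresentation π) = g :=
    MvPolynomial.algHom_ext fun v => by
      rw [AlgHom.comp_apply, tensorPresentation_X, tensorLift_singleAlgHom, hψ, rename_X]
  exact DFunLike.congr_fun hcomp p

theorem tensorPresentation_eq_zero_iff [Finite ι] {F : ι → MvPolynomial τ k}
    (hπ : ∀ i, Function.Surjective (π i)) (hker : ∀ i p, π i p = 0 ↔ p ∈ Ideal.span {F i})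
    {p : MvPolynomial (ι × τ) k} : tensorPresentation π p = 0 ↔ p ∈ blockIdeal F := by
  cases nonempty_fintype ι
  refine ⟨fun hp => ?_, fun hp => ?_⟩
  · set q := Ideal.Quotient.mkₐ k (blockIdeal F)
    have hle : ∀ i, RingHom.ker (π i).toRingHom ≤ RingHom.ker (q.comp (inBlock i)).toRingHom :=
      fun i x hx => Ideal.Quotient.eq_zero_iff_mem.2 (inBlock_mem_blockIdeal ((hker i x).1 hx))
    rw [← Ideal.Quotient.eq_zero_iff_mem, ← Ideal.Quotient.mkₐ_eq_mk k,
      ← tensorLift_tensorPresentation (fun i => AlgHom.liftOfSurjective_apply _ (hπ i) _ (hle i)),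
      hp, map_zero]
  · suffices blockIdeal F ≤ RingHom.ker (tensorPresentation π) from this hp
    refine Ideal.span_le.2 ?_
    rintro _ ⟨i, rfl⟩
    rw [SetLike.mem_coe, RingHom.mem_ker, tensorPresentation_inBlock,
      (hker i _).2 (Ideal.mem_span_singleton_self _), map_zero]

end BlockPresentation

section ProductVariety

variable {k ι τ : Type*} [Field k] {F : ι → MvPolynomial τ k}

theorem eval_eq_zero_of_mem_blockIdeal {p : MvPolynomial (ι × τ) k} (hp : p ∈ blockIdeal F)
    {a : ι → τ → k} (ha : ∀ i, eval (a i) (F i) = 0) : eval (Function.uncurry a) p = 0 := by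
  suffices blockIdeal F ≤ RingHom.ker (eval (Function.uncurry a)) from this hp
  refine Ideal.span_le.2 ?_
  rintro _ ⟨i, rfl⟩
  rw [SetLike.mem_coe, RingHom.mem_ker, eval_inBlock, ha]

theorem mem_blockIdeal_iff [Finite ι]
    (hF : ∀ i p, p ∈ Ideal.span {F i} ↔ ∀ a, eval a (F i) = 0 → eval a p = 0)
    {p : MvPolynomial (ι × τ) k} :
    p ∈ blockIdeal F ↔
      ∀ a : ι → τ → k, (∀ i, eval (a i) (F i) = 0) → eval (Function.uncurry a) p = 0 := by
  classical
  cases nonempty_fintype ι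
  refine ⟨fun hp a => eval_eq_zero_of_mem_blockIdeal hp, fun hp => ?_⟩
  let π := fun i => Ideal.Quotient.mkₐ k (Ideal.span {F i})
  have hπ : ∀ i, Function.Surjective (π i) := fun i => Ideal.Quotient.mk_surjective
  have hker : ∀ i x, π i x = 0 ↔ x ∈ Ideal.span {F i} := fun i x => Ideal.Quotient.eq_zero_iff_mem
  -- The factors are separated by evaluations at points, hence so is their tensor product.
  let W := fun i => {φ : Module.Dual k (MvPolynomial τ k ⧸ Ideal.span {F i}) |
    ∃ a, eval a (F i) = 0 ∧ ∃ ψ : _ →ₐ[k] k, (∀ q, ψ (π i q) = eval a q) ∧ φ = ψ.toLinearMap}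
  rw [← tensorPresentation_eq_zero_iff hπ hker]
  refine eq_zero_of_forall_dualDistrib_eq_zero (W := W) (fun i x hx => ?_) fun φ hφ => ?_
  · obtain ⟨q, rfl⟩ := hπ i x
    refine (hker i q).2 ((hF i q).2 fun a ha => ?_)
    have hle : RingHom.ker (π i).toRingHom ≤ RingHom.ker (aeval a : _ →ₐ[k] k).toRingHom :=
      fun x hx => (hF i x).1 ((hker i x).1 hx) a ha
    have hψ := AlgHom.liftOfSurjective_apply (π i) (hπ i) _ hle
    exact (hψ q).symm.trans (hx _ ⟨a, ha, _, hψ, rfl⟩)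
  · choose a ha ψ hψ hφ using hφ
    obtain rfl : φ = fun i => (ψ i).toLinearMap := funext hφ
    rw [dualDistrib_tprod_toLinearMap, AlgHom.toLinearMap_apply, tensorLift_tensorPresentation
      (g := aeval (Function.uncurry a)) fun i q => (hψ i q).trans (eval_inBlock a i q).symm]
    exact hp a ha

end ProductVariety

/-! ### Products of fibers -/

section BlockDegree

variable {k ι τ : Type*} [CommRing k] [DecidableEq ι]

/-- The weight on blocks of variables for which the weighted degree of a polynomial is its degree
in the variables of block `j`. -/
def blockWeight (j : ι) (v : ι × τ) : ℕ :=
  if v.1 = j then 1 else 0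

theorem isWeightedHomogeneous_rename {σ R M : Type*} [CommSemiring R] [AddCommMonoid M]
    {w : σ → M} {f : τ → σ} {p : MvPolynomial τ R} {e : M}
    (hp : p.IsWeightedHomogeneous (w ∘ f) e) : (rename f p).IsWeightedHomogeneous w e := by
  intro s hs
  obtain ⟨u, rfl, hu⟩ := coeff_rename_ne_zero f p s hs
  rw [← hp hu, Finsupp.weight_apply, Finsupp.weight_apply,
    Finsupp.sum_mapDomain_index (by simp) (by simp [add_smul])]
  rfl

theorem isWeightedHomogeneous_inBlock {e : ℕ} {p : MvPolynomial τ k} (hp : p.IsHomogeneous e)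
    (j l : ι) :
    (inBlock l p).IsWeightedHomogeneous (blockWeight j) (if l = j then e else 0) := by
  refine isWeightedHomogeneous_rename ?_
  split_ifs with hlj
  · rwa [show blockWeight j ∘ Prod.mk l = (1 : τ → ℕ) from funext fun _ => if_pos hlj]
  · rw [show blockWeight j ∘ Prod.mk l = (0 : τ → ℕ) from funext fun _ => if_neg hlj]
    intro s _
    simp [Finsupp.weight_apply]

theorem sum_X_mul_pderiv_of_isWeightedHomogeneous [Finite ι] [Fintype τ] {j : ι} {m : ℕ}
    {p : MvPolynomial (ι × τ) k} (hp : p.IsWeightedHomogeneous (blockWeight j) m) :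
    ∑ c, X (j, c) * pderiv (j, c) p = m • p := by
  cases nonempty_fintype ι
  rw [← hp.sum_weight_X_mul_pderiv, Fintype.sum_prod_type, Finset.sum_eq_single j]
  · simp [blockWeight]
  · intro l _ hl
    simp [blockWeight, hl]
  · exact fun hj => absurd (Finset.mem_univ j) hj

end BlockDegree

section Freeze

variable {k ι τ : Type*} [CommRing k] [DecidableEq ι] (j : ι) (a : ι → τ → k)

/-- Specialization of the variables outside block `j` to the coordinates of `a`. -/
noncomputable def freeze : MvPolynomial (ι × τ) k →ₐ[k] MvPolynomial τ k :=
  aeval fun v => if v.1 = j then X v.2 else C (a v.1 v.2)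

theorem eval_freeze (b : τ → k) (p : MvPolynomial (ι × τ) k) :
    eval b (freeze j a p) = eval (Function.uncurry (Function.update a j b)) p := by
  have hcomp : (aeval b).comp (freeze j a) =
      aeval (R := k) (Function.uncurry (Function.update a j b)) :=
    MvPolynomial.algHom_ext fun ⟨l, c⟩ => by
      by_cases hl : l = j <;> simp [freeze, hl]
  exact DFunLike.congr_fun hcomp p

theorem freeze_inBlock_self (p : MvPolynomial τ k) : freeze j a (inBlock j p) = p := by
  have hcomp : (freeze j a).comp (inBlock j) = AlgHom.id k _ :=
    MvPolynomial.algHom_ext fun c => by simp [freeze]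
  exact DFunLike.congr_fun hcomp p

variable {j} in
theorem freeze_inBlock_of_ne {l : ι} (hl : l ≠ j) (p : MvPolynomial τ k) :
    freeze j a (inBlock l p) = C (eval (a l) p) := by
  have hcomp : (freeze j a).comp (inBlock l) = (Algebra.ofId k _).comp (aeval (a l)) :=
    MvPolynomial.algHom_ext fun c => by simp [freeze, hl, Algebra.ofId_apply]
  exact DFunLike.congr_fun hcomp p

theorem homogeneousComponent_freeze (m : ℕ) (p : MvPolynomial (ι × τ) k) :
    homogeneousComponent m (freeze j a p) =
      freeze j a (weightedHomogeneousComponent (blockWeight j) m p) := by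
  have hcomp : (weightScaling 1).comp (freeze j a) =
      (Polynomial.mapAlgHom (freeze j a)).comp (weightScaling (blockWeight j)) :=
    MvPolynomial.algHom_ext fun ⟨l, c⟩ => by
      by_cases hl : l = j <;>
        simp [freeze, weightScaling, blockWeight, hl, IsScalarTower.algebraMap_apply k
          (MvPolynomial τ k) (Polynomial (MvPolynomial τ k)), algHom_C]
  rw [homogeneousComponent, ← coeff_weightScaling, ← coeff_weightScaling]
  refine (congrArg (fun q => Polynomial.coeff q m) (DFunLike.congr_fun hcomp p)).trans ?_
  exact Polynomial.coeff_map _ _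

variable {j}

theorem totalDegree_freeze_le {m : ℕ} {p : MvPolynomial (ι × τ) k}
    (hp : weightedTotalDegree (blockWeight j) p ≤ m) : (freeze j a p).totalDegree ≤ m := by
  rw [← weightedTotalDegree_one, ← weightedHomogeneousComponent_eq_zero_iff_forall_lt] at *
  intro N hN
  exact (homogeneousComponent_freeze j a N p).trans (by rw [hp N hN, map_zero])

theorem eval_update_of_weightedTotalDegree_eq_zero {p : MvPolynomial (ι × τ) k}
    (hp : weightedTotalDegree (blockWeight j) p ≤ 0) (b : τ → k) :
    eval (Function.uncurry (Function.update a j b)) p = eval (Function.uncurry a) p := by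
  have hC := totalDegree_eq_zero_iff_eq_C.1 (Nat.le_zero.1 (totalDegree_freeze_le a hp))
  conv_rhs => rw [← Function.update_eq_self j a]
  rw [← eval_freeze, ← eval_freeze, hC, eval_C, eval_C]

theorem freeze_mem_span {F : ι → MvPolynomial τ k} {a : ι → τ → k}
    (ha : ∀ l ≠ j, eval (a l) (F l) = 0) {p : MvPolynomial (ι × τ) k} (hp : p ∈ blockIdeal F) :
    freeze j a p ∈ Ideal.span {F j} := by
  suffices blockIdeal F ≤ (Ideal.span {F j}).comap (freeze j a) from this hp
  refine Ideal.span_le.2 ?_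
  rintro _ ⟨l, rfl⟩
  obtain rfl | hl := eq_or_ne l j
  · simpa only [SetLike.mem_coe, Ideal.mem_comap, freeze_inBlock_self] using
      Ideal.mem_span_singleton_self _
  · simp only [SetLike.mem_coe, Ideal.mem_comap, freeze_inBlock_of_ne a hl, ha l hl, C_0,
      Ideal.zero_mem]

end Freeze

section FiberProduct

variable {k ι : Type*} [Field k] {Ω : ι → MvPolynomial (Fin 3) k} {ξ : ι → k} {n : ι → ℕ}

/-- The ideal generated by the polynomials `Ωᵢ - ξᵢ` in separate blocks of variables, which cuts
out the product of the fibers `Ωᵢ = ξᵢ`. -/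
noncomputable def fiberIdeal (Ω : ι → MvPolynomial (Fin 3) k) (ξ : ι → k) :
    Ideal (MvPolynomial (ι × Fin 3) k) :=
  blockIdeal fun i => Ω i - C (ξ i)

theorem eval_eq_zero_of_mem_fiberIdeal {p : MvPolynomial (ι × Fin 3) k} (hp : p ∈ fiberIdeal Ω ξ)
    {a : ι → Fin 3 → k} (ha : ∀ i, eval (a i) (Ω i) = ξ i) : eval (Function.uncurry a) p = 0 :=
  eval_eq_zero_of_mem_blockIdeal hp fun i => by rw [map_sub, ha, eval_C, sub_self]

theorem mem_fiberIdeal_iff [Finite ι] [IsAlgClosed k] (hΩ : ∀ i, (Ω i).IsHomogeneous (n i))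
    (hiso : ∀ i, HasIsolatedSingularity (Ω i)) {p : MvPolynomial (ι × Fin 3) k} :
    p ∈ fiberIdeal Ω ξ ↔
      ∀ a : ι → Fin 3 → k, (∀ i, eval (a i) (Ω i) = ξ i) → eval (Function.uncurry a) p = 0 := by
  have hF : ∀ i p, p ∈ Ideal.span {Ω i - C (ξ i)} ↔
      ∀ a, eval a (Ω i - C (ξ i)) = 0 → eval a p = 0 := fun i p => by
    simp only [map_sub, eval_C, sub_eq_zero, mem_span_sub_C_iff (hΩ i) (hiso i)]
  simp only [fiberIdeal, mem_blockIdeal_iff hF, map_sub, eval_C, sub_eq_zero]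

variable [DecidableEq ι] {j : ι}

-- The asymptotic cone of the fiber `Ωⱼ = ξⱼ` is the fiber `Ωⱼ = 0`.
theorem eval_weightedHomogeneousComponent_eq_zero [Infinite k] (hΩ : (Ω j).IsHomogeneous (n j))
    (hiso : HasIsolatedSingularity (Ω j)) (hn : n j ≠ 0) {m : ℕ}
    {p : MvPolynomial (ι × Fin 3) k} (hp : p ∈ fiberIdeal Ω ξ)
    (hdeg : weightedTotalDegree (blockWeight j) p ≤ m) {a : ι → Fin 3 → k}
    (ha : ∀ i, eval (a i) (Ω i) = Function.update ξ j 0 i) :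
    eval (Function.uncurry a) (weightedHomogeneousComponent (blockWeight j) m p) = 0 := by
  have hmem : freeze j a p ∈ Ideal.span {Ω j - C (ξ j)} :=
    freeze_mem_span (fun l hl => by
      rw [map_sub, ha, Function.update_of_ne hl, eval_C, sub_self]) hp
  obtain ⟨q, hq⟩ := dvd_homogeneousComponent hΩ (potential_ne_zero hiso) hn hmem
    (totalDegree_freeze_le a hdeg)
  rw [homogeneousComponent_freeze] at hq
  rw [← Function.update_eq_self j a, ← eval_freeze, hq, map_mul, ha,
    Function.update_self, zero_mul]

theorem weightedHomogeneousComponent_inBlock_sub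
    (hn : n j ≠ 0) (l : ι) {N : ℕ} (hN : (if l = j then n l else 0) ≤ N) :
    weightedHomogeneousComponent (blockWeight j) N
      (inBlock l (Ω l - C (ξ l)) - inBlock l (Ω l - C (Function.update ξ j 0 l))) = 0 := by
  obtain rfl | hl := eq_or_ne l j
  · rw [if_pos rfl] at hN
    have hC : (inBlock l (C (ξ l) : MvPolynomial (Fin 3) k)).IsWeightedHomogeneous
        (blockWeight l) 0 := by
      simpa using isWeightedHomogeneous_inBlock (isHomogeneous_C (Fin 3) (ξ l)) l l
    rw [Function.update_self, C_0, sub_zero, ← map_sub, sub_sub_cancel_left, map_neg, map_neg,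
      hC.weightedHomogeneousComponent_ne N (by omega), neg_zero]
  · rw [Function.update_of_ne hl, sub_self, map_zero]

theorem exists_sub_mem_fiberIdeal [Finite ι] [IsAlgClosed k] (hΩ : ∀ i, (Ω i).IsHomogeneous (n i))
    (hiso : ∀ i, HasIsolatedSingularity (Ω i)) (hn : n j ≠ 0) {m : ℕ}
    {p : MvPolynomial (ι × Fin 3) k} (hdeg : weightedTotalDegree (blockWeight j) p ≤ m + 1)
    (hp : ∀ a : ι → Fin 3 → k, (∀ i, eval (a i) (Ω i) = Function.update ξ j 0 i) →
      eval (Function.uncurry a) (weightedHomogeneousComponent (blockWeight j) (m + 1) p) = 0) :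
    ∃ q, p - q ∈ fiberIdeal Ω ξ ∧ weightedTotalDegree (blockWeight j) q ≤ m := by
  set u := weightedHomogeneousComponent (blockWeight j) (m + 1) p
  have hG : ∀ l, (inBlock l (Ω l - C (Function.update ξ j 0 l))).IsWeightedHomogeneous
      (blockWeight j) (if l = j then n l else 0) := fun l => by
    obtain rfl | hl := eq_or_ne l j
    · simpa using isWeightedHomogeneous_inBlock (hΩ l) l l
    · have h₁ := isWeightedHomogeneous_inBlock (hΩ l) j l
      have h₂ := isWeightedHomogeneous_inBlock (isHomogeneous_C (Fin 3) (ξ l)) j l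
      rw [if_neg hl] at h₁ h₂ ⊢
      rw [Function.update_of_ne hl, map_sub]
      exact h₁.sub h₂
  obtain ⟨v, hv, huv⟩ := exists_mem_span_weightedTotalDegree_sub_le hG
    (fun l N hN => weightedHomogeneousComponent_inBlock_sub (ξ := ξ) hn l hN)
    (weightedHomogeneousComponent_isWeightedHomogeneous (m + 1) p)
    ((mem_fiberIdeal_iff hΩ hiso).2 hp)
  refine ⟨p - v, by rwa [sub_sub_cancel], ?_⟩
  rw [← sub_add_sub_cancel p u v]
  exact weightedTotalDegree_add_le
    (weightedTotalDegree_sub_weightedHomogeneousComponent_le hdeg) huv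

end FiberProduct

/-! ### Poisson brackets in coordinates -/

section Poisson

variable {k A : Type*} [CommRing k] [CommRing A] [Algebra k A] (P : PoissonStructure k A)

theorem bracket_add_right (a b c : A) : P.bracket a (b + c) = P.bracket a b + P.bracket a c := by
  rw [P.antisymm, P.add_left, P.antisymm a b, P.antisymm a c, neg_add]

theorem bracket_smul_right (r : k) (a b : A) : P.bracket a (r • b) = r • P.bracket a b := by
  rw [P.antisymm, P.smul_left, P.antisymm a b, smul_neg]

/-- The Hamiltonian derivation `{a, -}` of a Poisson algebra. -/
def hamiltonian (a : A) : Derivation k A A :=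
  Derivation.mk'
    { toFun := P.bracket a
      map_add' := bracket_add_right P a
      map_smul' := fun r => bracket_smul_right P r a }
    fun b c => by
      rw [LinearMap.coe_mk, AddHom.coe_mk, P.leibniz, smul_eq_mul, smul_eq_mul, mul_comm, add_comm]

theorem hamiltonian_apply (a b : A) : hamiltonian P a b = P.bracket a b :=
  rfl

theorem bracket_one_right (a : A) : P.bracket a 1 = 0 :=
  (hamiltonian P a).map_one_eq_zero

theorem bracket_one_left (a : A) : P.bracket 1 a = 0 := by
  rw [P.antisymm, bracket_one_right, neg_zero]

theorem derivation_algHom {σ : Type*} [Fintype σ] (D : Derivation k A A)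
    (φ : MvPolynomial σ k →ₐ[k] A) (p : MvPolynomial σ k) :
    D (φ p) = ∑ i, φ (pderiv i p) * D (φ (X i)) := by
  induction p using MvPolynomial.induction_on with
  | C r => simp [algHom_C]
  | add p q hp hq => simp only [map_add, hp, hq, add_mul, Finset.sum_add_distrib]
  | mul_X p v hp =>
    classical
    simp only [map_mul, Derivation.leibniz, hp, smul_eq_mul, pderiv_X, map_add, add_mul,
      Finset.sum_add_distrib, Finset.mul_sum, mul_assoc]
    congr 1
    rw [Finset.sum_eq_single v (fun i _ hi => by simp [Pi.single_eq_of_ne' hi]) (by simp)]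
    simp

theorem bracket_algHom {σ : Type*} [Fintype σ] (φ : MvPolynomial σ k →ₐ[k] A)
    (p q : MvPolynomial σ k) :
    P.bracket (φ p) (φ q) =
      ∑ u, ∑ v, φ (pderiv u p) * φ (pderiv v q) * P.bracket (φ (X u)) (φ (X v)) := by
  have hleft : ∀ b, P.bracket (φ p) b = ∑ u, φ (pderiv u p) * P.bracket (φ (X u)) b := fun b => by
    rw [P.antisymm, ← hamiltonian_apply, derivation_algHom, ← Finset.sum_neg_distrib]
    exact Finset.sum_congr rfl fun u _ => by rw [hamiltonian_apply, P.antisymm b, mul_neg, neg_neg]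
  rw [hleft]
  refine Finset.sum_congr rfl fun u _ => ?_
  rw [← hamiltonian_apply, derivation_algHom, Finset.mul_sum]
  exact Finset.sum_congr rfl fun v _ => by rw [hamiltonian_apply, mul_assoc]

/-- The triple `y` satisfies the relations between the coordinate functions of the Poisson algebra
`A_G`. The indices `c + 1` and `c + 2` are taken modulo `3`. -/
def IsJacobianTriple (G : MvPolynomial (Fin 3) k) (y : Fin 3 → A) : Prop :=
  ∀ c, P.bracket (y (c + 1)) (y (c + 2)) = aeval y (pderiv c G)

variable {P} in
theorem IsJacobianTriple.map {B : Type*} [CommRing B] [Algebra k B] {Q : PoissonStructure k B}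
    {G : MvPolynomial (Fin 3) k} {y : Fin 3 → A} (hy : IsJacobianTriple P G y) {f : A →ₐ[k] B}
    (hf : IsPoissonHom P Q f) : IsJacobianTriple Q G (f ∘ y) := fun c => by
  rw [Function.comp_apply, Function.comp_apply, ← hf, hy]
  exact comp_aeval_apply y f (pderiv c G)

end Poisson

section JacobianBracket

variable {k : Type*} [CommRing k] (Ω : MvPolynomial (Fin 3) k)

theorem jacBracket_X_add_one_X_add_two (c : Fin 3) :
    jacBracket Ω (X (c + 1)) (X (c + 2)) = pderiv c Ω := by
  fin_cases c <;> simp [jacBracket, Matrix.det_fin_three, pderiv_X]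

open Matrix in
theorem sum_mul_eval_jacBracket_X (g b : Fin 3 → k) (c : Fin 3) :
    ∑ i, g i * eval b (jacBracket Ω (X i) (X c)) =
      ((fun i => eval b (pderiv i Ω)) ⨯₃ g) c := by
  fin_cases c <;>
    simp [Fin.sum_univ_three, jacBracket, Matrix.det_fin_three, pderiv_X, cross_apply] <;> ring

variable {Ω} in
theorem isHomogeneous_jacBracket_X {n : ℕ} (hΩ : Ω.IsHomogeneous n) (i j : Fin 3) :
    (jacBracket Ω (X i) (X j)).IsHomogeneous (n - 1) := by
  have hneg : ∀ c, (-pderiv c Ω).IsHomogeneous (n - 1) := fun c => hΩ.pderiv.neg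
  fin_cases i <;> fin_cases j <;>
    simp [jacBracket, Matrix.det_fin_three, pderiv_X, hΩ.pderiv, hneg, isHomogeneous_zero]

end JacobianBracket

section BlockBracket

variable {k ι : Type*} [CommRing k] [DecidableEq ι] (Ω : ι → MvPolynomial (Fin 3) k)

/-- The bracket of two variables for the Poisson structure on `⨂ A_{Ωᵢ}`. -/
noncomputable def coordinateBracket (u v : ι × Fin 3) : MvPolynomial (ι × Fin 3) k :=
  if u.1 = v.1 then inBlock u.1 (jacBracket (Ω u.1) (X u.2) (X v.2)) else 0

/-- The Poisson bracket on the polynomial ring `⨂ A_{Ωᵢ}`. -/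
noncomputable def blockBracket [Fintype ι] (p q : MvPolynomial (ι × Fin 3) k) :
    MvPolynomial (ι × Fin 3) k :=
  ∑ u, ∑ v, pderiv u p * pderiv v q * coordinateBracket Ω u v

theorem blockBracket_X_right [Fintype ι] (p : MvPolynomial (ι × Fin 3) k) (j : ι) (c : Fin 3) :
    blockBracket Ω p (X (j, c)) =
      ∑ i, pderiv (j, i) p * inBlock j (jacBracket (Ω j) (X i) (X c)) := by
  have hinner : ∀ u, ∑ v, pderiv u p * pderiv v (X (j, c)) * coordinateBracket Ω u v =
      pderiv u p * coordinateBracket Ω u (j, c) := fun u => by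
    rw [Finset.sum_eq_single (j, c) (fun v _ hv => by rw [pderiv_X_of_ne hv.symm]; ring) (by simp),
      pderiv_X_self, mul_one]
  rw [blockBracket, Finset.sum_congr rfl fun u _ => hinner u, Fintype.sum_prod_type,
    Finset.sum_eq_single j (fun l _ hl => by simp [coordinateBracket, hl]) (by simp)]
  simp [coordinateBracket]

variable {Ω} {n : ι → ℕ}

theorem isWeightedHomogeneous_coordinateBracket (hΩ : ∀ i, (Ω i).IsHomogeneous (n i)) (j : ι)
    (u v : ι × Fin 3) :
    (coordinateBracket Ω u v).IsWeightedHomogeneous (blockWeight j)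
      (if u.1 = j then n j - 1 else 0) := by
  rw [coordinateBracket]
  split_ifs with huv hj hj
  · simpa [hj] using
      isWeightedHomogeneous_inBlock (isHomogeneous_jacBracket_X (hΩ u.1) u.2 v.2) j u.1
  · simpa [hj] using
      isWeightedHomogeneous_inBlock (isHomogeneous_jacBracket_X (hΩ u.1) u.2 v.2) j u.1
  all_goals exact isWeightedHomogeneous_zero _ _ _

theorem weightedTotalDegree_blockBracket_le [Fintype ι] (hΩ : ∀ i, (Ω i).IsHomogeneous (n i))
    {j : ι} (hn : 3 ≤ n j) {m : ℕ} (hm : 1 ≤ m) {p q : MvPolynomial (ι × Fin 3) k}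
    (hp : weightedTotalDegree (blockWeight j) p ≤ m)
    (hq : weightedTotalDegree (blockWeight j) q ≤ m) :
    weightedTotalDegree (blockWeight j) (blockBracket Ω p q) ≤ 2 * m + n j - 3 := by
  refine weightedTotalDegree_sum_le _ fun u _ => weightedTotalDegree_sum_le _ fun v _ => ?_
  by_cases huv : u.1 = v.1
  · have hu := weightedTotalDegree_pderiv_le u hp
    have hv := weightedTotalDegree_pderiv_le v hq
    have hc := weightedTotalDegree_le_of_isWeightedHomogeneous
      (isWeightedHomogeneous_coordinateBracket hΩ j u v)
    rw [blockWeight] at hu hv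
    rw [← huv] at hv
    refine (weightedTotalDegree_mul_le
      (weightedTotalDegree_mul_le hu hv) hc).trans ?_
    split_ifs <;> omega
  · simp [coordinateBracket, huv, weightedTotalDegree]

end BlockBracket

section Presentation

variable {k ι : Type*} [Field k]

/-- The quotient map `k[x, y, z] → P_{Ω - ξ}` as a homomorphism of algebras. -/
noncomputable def potentialQuotient (Ω : MvPolynomial (Fin 3) k) (ξ : k) :
    MvPolynomial (Fin 3) k →ₐ[k] PQuot k Ω ξ :=
  Ideal.Quotient.mkₐ k (Ideal.span {Ω - C ξ})

theorem potentialQuotient_surjective (Ω : MvPolynomial (Fin 3) k) (ξ : k) :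
    Function.Surjective (potentialQuotient Ω ξ) :=
  Ideal.Quotient.mk_surjective

theorem potentialQuotient_eq_zero_iff (Ω : MvPolynomial (Fin 3) k) (ξ : k)
    (p : MvPolynomial (Fin 3) k) : potentialQuotient Ω ξ p = 0 ↔ p ∈ Ideal.span {Ω - C ξ} :=
  Ideal.Quotient.eq_zero_iff_mem

variable [DecidableEq ι] (Ω : ι → MvPolynomial (Fin 3) k) (ξ : ι → k)

/-- The presentation of `⨂ P_{Ωᵢ - ξᵢ}` as a quotient of a polynomial ring in `3d` variables. -/
noncomputable def presentation : MvPolynomial (ι × Fin 3) k →ₐ[k] ⨂[k] i, PQuot k (Ω i) (ξ i) :=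
  tensorPresentation fun i => potentialQuotient (Ω i) (ξ i)

/-- The coordinate functions of the `i`-th tensor factor. -/
noncomputable def generator (i : ι) (c : Fin 3) : ⨂[k] i, PQuot k (Ω i) (ξ i) :=
  presentation Ω ξ (X (i, c))

theorem presentation_surjective [Finite ι] : Function.Surjective (presentation Ω ξ) :=
  tensorPresentation_surjective fun i => potentialQuotient_surjective (Ω i) (ξ i)

variable {Ω ξ}

theorem presentation_eq_iff [Finite ι] {p q : MvPolynomial (ι × Fin 3) k} :
    presentation Ω ξ p = presentation Ω ξ q ↔ p - q ∈ fiberIdeal Ω ξ := by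
  rw [← sub_eq_zero, ← map_sub]
  exact tensorPresentation_eq_zero_iff (fun i => potentialQuotient_surjective (Ω i) (ξ i))
    fun i => potentialQuotient_eq_zero_iff (Ω i) (ξ i)

end Presentation

section TensorBracket

variable {k : Type*} [CommRing k] {d : ℕ} {A : Fin d → Type*} [∀ i, CommRing (A i)]
  [∀ i, Algebra k (A i)] {P : ∀ i, PoissonStructure k (A i)}
  {PT : PoissonStructure k (⨂[k] i, A i)}

theorem bracket_singleAlgHom_self (hPT : IsPiTensorBracket P PT) (i : Fin d) (x y : A i) :
    PT.bracket (singleAlgHom i x) (singleAlgHom i y) = singleAlgHom i ((P i).bracket x y) := by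
  rw [singleAlgHom_apply, singleAlgHom_apply, singleAlgHom_apply, hPT,
    Finset.sum_eq_single i _ (by simp)]
  · refine congrArg _ (funext fun j => ?_)
    obtain rfl | hj := eq_or_ne j i
    · simp
    · simp [Function.update_of_ne hj, Pi.mulSingle_eq_of_ne hj]
  · intro l _ hl
    refine MultilinearMap.map_coord_zero _ l ?_
    rw [Function.update_self, MonoidHom.mulSingle_apply, Pi.mulSingle_eq_of_ne hl,
      bracket_one_left]

theorem bracket_singleAlgHom_of_ne (hPT : IsPiTensorBracket P PT) {i j : Fin d} (hij : i ≠ j)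
    (x : A i) (y : A j) : PT.bracket (singleAlgHom i x) (singleAlgHom j y) = 0 := by
  rw [singleAlgHom_apply, singleAlgHom_apply, hPT]
  refine Finset.sum_eq_zero fun l _ => MultilinearMap.map_coord_zero _ l ?_
  rw [Function.update_self, MonoidHom.mulSingle_apply, MonoidHom.mulSingle_apply]
  obtain rfl | hl := eq_or_ne l i
  · rw [Pi.mulSingle_eq_of_ne hij, bracket_one_right]
  · rw [Pi.mulSingle_eq_of_ne hl, bracket_one_left]

end TensorBracket

section PresentationBracket

variable {k : Type*} [Field k] {d : ℕ} {Ω : Fin d → MvPolynomial (Fin 3) k} {ξ : Fin d → k}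
  {P : ∀ i, PoissonStructure k (PQuot k (Ω i) (ξ i))}
  {PT : PoissonStructure k (⨂[k] i, PQuot k (Ω i) (ξ i))}

theorem bracket_presentation_X (hP : ∀ i, IsInducedBracket (Ω i) (ξ i) (P i))
    (hPT : IsPiTensorBracket P PT) (u v : Fin d × Fin 3) :
    PT.bracket (presentation Ω ξ (X u)) (presentation Ω ξ (X v)) =
      presentation Ω ξ (coordinateBracket Ω u v) := by
  obtain ⟨i, c⟩ := u
  obtain ⟨j, c'⟩ := v
  rw [coordinateBracket, presentation, tensorPresentation_X, tensorPresentation_X]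
  obtain rfl | hij := eq_or_ne i j
  · rw [if_pos rfl, tensorPresentation_inBlock, bracket_singleAlgHom_self hPT]
    exact congrArg _ (hP i _ _)
  · rw [if_neg hij, map_zero, bracket_singleAlgHom_of_ne hPT hij]

theorem bracket_presentation (hP : ∀ i, IsInducedBracket (Ω i) (ξ i) (P i))
    (hPT : IsPiTensorBracket P PT) (p q : MvPolynomial (Fin d × Fin 3) k) :
    PT.bracket (presentation Ω ξ p) (presentation Ω ξ q) =
      presentation Ω ξ (blockBracket Ω p q) := by
  simp only [bracket_algHom, bracket_presentation_X hP hPT, blockBracket, map_sum, map_mul]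

theorem isJacobianTriple_generator (hP : ∀ i, IsInducedBracket (Ω i) (ξ i) (P i))
    (hPT : IsPiTensorBracket P PT) (i : Fin d) :
    IsJacobianTriple PT (Ω i) (generator Ω ξ i) := fun c => by
  have haeval : (aeval (generator Ω ξ i)) = (presentation Ω ξ).comp (inBlock i) :=
    MvPolynomial.algHom_ext fun c => by simp [generator]
  rw [generator, generator, bracket_presentation_X hP hPT, coordinateBracket, if_pos rfl,
    jacBracket_X_add_one_X_add_two, haeval, AlgHom.comp_apply]

end PresentationBracket

/-! ### Degree bounds in a block of variables -/

section BlockDegreeBound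

variable {k ι : Type*} [Field k] [DecidableEq ι] {Ω : ι → MvPolynomial (Fin 3) k} {ξ : ι → k}

/-- The element `x` of `⨂ P_{Ωᵢ - ξᵢ}` is represented by a polynomial of degree at most `m` in the
variables of block `j`. -/
def HasBlockDegreeLE (Ω : ι → MvPolynomial (Fin 3) k) (ξ : ι → k) (j : ι) (m : ℕ)
    (x : ⨂[k] i, PQuot k (Ω i) (ξ i)) : Prop :=
  ∃ p, presentation Ω ξ p = x ∧ weightedTotalDegree (blockWeight j) p ≤ m

variable {j : ι} {m : ℕ}

theorem HasBlockDegreeLE.mono {m' : ℕ} {x : ⨂[k] i, PQuot k (Ω i) (ξ i)}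
    (hx : HasBlockDegreeLE Ω ξ j m x) (hm : m ≤ m') : HasBlockDegreeLE Ω ξ j m' x :=
  let ⟨p, hpx, hp⟩ := hx
  ⟨p, hpx, hp.trans hm⟩

theorem exists_hasBlockDegreeLE [Finite ι] (j : ι) (x : ⨂[k] i, PQuot k (Ω i) (ξ i)) :
    ∃ m, HasBlockDegreeLE Ω ξ j m x :=
  let ⟨p, hpx⟩ := presentation_surjective Ω ξ x
  ⟨_, p, hpx, le_rfl⟩

theorem hasBlockDegreeLE_of_descent [Finite ι] {κ : Type*} [Finite κ]
    {y : κ → ⨂[k] i, PQuot k (Ω i) (ξ i)} (b : ℕ)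
    (h : ∀ m ≥ b, (∀ c, HasBlockDegreeLE Ω ξ j (m + 1) (y c)) →
      ∀ c, HasBlockDegreeLE Ω ξ j m (y c)) (c : κ) :
    HasBlockDegreeLE Ω ξ j b (y c) := by
  choose e he using fun c => exists_hasBlockDegreeLE j (y c)
  obtain ⟨M, hM⟩ := (Set.finite_range e).bddAbove
  have hstart : ∀ c, HasBlockDegreeLE Ω ξ j (max b M) (y c) := fun c =>
    (he c).mono ((hM ⟨c, rfl⟩).trans (le_max_right b M))
  exact Nat.decreasingInduction' (P := fun m => ∀ c, HasBlockDegreeLE Ω ξ j m (y c))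
    (fun m _ hm => h m hm) (le_max_left b M) hstart c

theorem hasBlockDegreeLE_of_eval_eq_zero [Finite ι] [CharZero k] [IsAlgClosed k] {n : ι → ℕ}
    (hΩ : ∀ i, (Ω i).IsHomogeneous (n i)) (hiso : ∀ i, HasIsolatedSingularity (Ω i))
    (hn : n j ≠ 0) {p : MvPolynomial (ι × Fin 3) k}
    (hdeg : weightedTotalDegree (blockWeight j) p ≤ m + 1)
    (hp : ∀ a : ι → Fin 3 → k, (∀ i, eval (a i) (Ω i) = Function.update ξ j 0 i) →
      eval (Function.uncurry a) (weightedHomogeneousComponent (blockWeight j) (m + 1) p) = 0) :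
    HasBlockDegreeLE Ω ξ j m (presentation Ω ξ p) := by
  obtain ⟨q, hpq, hq⟩ := exists_sub_mem_fiberIdeal hΩ hiso hn hdeg hp
  exact ⟨q, (presentation_eq_iff.2 hpq).symm, hq⟩

end BlockDegreeBound

section JacobianTripleDescent

variable {k : Type*} [Field k] {d : ℕ} {Ω : Fin d → MvPolynomial (Fin 3) k}
  {ξ : Fin d → k} {n : Fin d → ℕ} {P : ∀ i, PoissonStructure k (PQuot k (Ω i) (ξ i))}
  {PT : PoissonStructure k (⨂[k] i, PQuot k (Ω i) (ξ i))} {j : Fin d} {m N : ℕ}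
  {G : MvPolynomial (Fin 3) k}

theorem blockBracket_sub_aeval_mem_fiberIdeal (hP : ∀ i, IsInducedBracket (Ω i) (ξ i) (P i))
    (hPT : IsPiTensorBracket P PT) {p : Fin 3 → MvPolynomial (Fin d × Fin 3) k}
    (hJ : IsJacobianTriple PT G (presentation Ω ξ ∘ p)) (c : Fin 3) :
    blockBracket Ω (p (c + 1)) (p (c + 2)) - aeval p (pderiv c G) ∈ fiberIdeal Ω ξ := by
  rw [← presentation_eq_iff, ← bracket_presentation hP hPT]
  exact (hJ c).trans (comp_aeval_apply p (presentation Ω ξ) (pderiv c G)).symm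

-- In degree `(N - 1) * (m + 1)` the bracket does not contribute, so the leading parts of a
-- Jacobian triple are a critical point of `G`.
theorem eval_pderiv_leadingPart_eq_zero [Infinite k] (hΩ : ∀ i, (Ω i).IsHomogeneous (n i))
    (hiso : HasIsolatedSingularity (Ω j)) (hn : 3 ≤ n j) (hG : G.IsHomogeneous N)
    (hm : 2 * (m + 1) + n j - 3 < (N - 1) * (m + 1))
    {p : Fin 3 → MvPolynomial (Fin d × Fin 3) k}
    (hp : ∀ c, weightedTotalDegree (blockWeight j) (p c) ≤ m + 1) {c : Fin 3}
    (hmem : blockBracket Ω (p (c + 1)) (p (c + 2)) - aeval p (pderiv c G) ∈ fiberIdeal Ω ξ)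
    {a : Fin d → Fin 3 → k} (ha : ∀ i, eval (a i) (Ω i) = Function.update ξ j 0 i) :
    eval (fun c => eval (Function.uncurry a)
      (weightedHomogeneousComponent (blockWeight j) (m + 1) (p c))) (pderiv c G) = 0 := by
  have hbr := weightedTotalDegree_blockBracket_le hΩ hn (Nat.le_add_left 1 m) (hp (c + 1))
    (hp (c + 2))
  have hae := weightedTotalDegree_aeval_le (hG.pderiv (i := c)) hp
  have htop := eval_weightedHomogeneousComponent_eq_zero (hΩ j) hiso (by omega) hmem
    (weightedTotalDegree_sub_le (hbr.trans hm.le) hae) ha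
  rw [map_sub, weightedHomogeneousComponent_eq_zero _ _ (hbr.trans_lt hm), zero_sub,
    weightedHomogeneousComponent_aeval hG.pderiv hp, map_neg, neg_eq_zero] at htop
  rw [← htop]
  exact (comp_aeval_apply _ (aeval (Function.uncurry a)) (pderiv c G)).symm

theorem IsJacobianTriple.hasBlockDegreeLE_of_succ [CharZero k] [IsAlgClosed k]
    (hP : ∀ i, IsInducedBracket (Ω i) (ξ i) (P i)) (hPT : IsPiTensorBracket P PT)
    (hΩ : ∀ i, (Ω i).IsHomogeneous (n i)) (hiso : ∀ i, HasIsolatedSingularity (Ω i))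
    (hn : 3 ≤ n j) (hG : G.IsHomogeneous N) (hGiso : HasIsolatedSingularity G)
    (hm : 2 * (m + 1) + n j - 3 < (N - 1) * (m + 1))
    {y : Fin 3 → ⨂[k] i, PQuot k (Ω i) (ξ i)} (hy : IsJacobianTriple PT G y)
    (hdeg : ∀ c, HasBlockDegreeLE Ω ξ j (m + 1) (y c)) (c : Fin 3) :
    HasBlockDegreeLE Ω ξ j m (y c) := by
  choose p hpy hp using hdeg
  obtain rfl : presentation Ω ξ ∘ p = y := funext hpy
  refine hasBlockDegreeLE_of_eval_eq_zero hΩ hiso (by omega) (hp c) fun a ha => ?_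
  exact congrFun (eq_zero_of_eval_pderiv_eq_zero hG hGiso fun c =>
    eval_pderiv_leadingPart_eq_zero hΩ (hiso j) hn hG hm hp
      (blockBracket_sub_aeval_mem_fiberIdeal hP hPT hy c) ha) c

theorem IsJacobianTriple.hasBlockDegreeLE_zero [CharZero k] [IsAlgClosed k]
    (hP : ∀ i, IsInducedBracket (Ω i) (ξ i) (P i)) (hPT : IsPiTensorBracket P PT)
    (hΩ : ∀ i, (Ω i).IsHomogeneous (n i)) (hiso : ∀ i, HasIsolatedSingularity (Ω i))
    (hn : 3 ≤ n j) (hG : G.IsHomogeneous N) (hGiso : HasIsolatedSingularity G) (hN : n j < N)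
    {y : Fin 3 → ⨂[k] i, PQuot k (Ω i) (ξ i)} (hy : IsJacobianTriple PT G y) (c : Fin 3) :
    HasBlockDegreeLE Ω ξ j 0 (y c) := by
  refine hasBlockDegreeLE_of_descent 0 (fun m _ => ?_) c
  refine hy.hasBlockDegreeLE_of_succ hP hPT hΩ hiso hn hG hGiso ?_
  obtain ⟨e, rfl⟩ := Nat.exists_eq_add_of_le (show 4 ≤ N by omega)
  rw [show 4 + e - 1 = e + 3 by omega]
  have : e ≤ e * (m + 1) := Nat.le_mul_of_pos_right e m.succ_pos
  linarith [show 2 * (m + 1) + n j - 3 ≤ 2 * (m + 1) + e by omega]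

theorem IsJacobianTriple.hasBlockDegreeLE_one [CharZero k] [IsAlgClosed k]
    (hP : ∀ i, IsInducedBracket (Ω i) (ξ i) (P i)) (hPT : IsPiTensorBracket P PT)
    (hΩ : ∀ i, (Ω i).IsHomogeneous (n i)) (hiso : ∀ i, HasIsolatedSingularity (Ω i))
    (hn : 3 ≤ n j) (hG : G.IsHomogeneous N) (hGiso : HasIsolatedSingularity G) (hN : n j ≤ N)
    (hN4 : 4 ≤ N) {y : Fin 3 → ⨂[k] i, PQuot k (Ω i) (ξ i)} (hy : IsJacobianTriple PT G y)
    (c : Fin 3) : HasBlockDegreeLE Ω ξ j 1 (y c) := by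
  refine hasBlockDegreeLE_of_descent 1 (fun m hm => ?_) c
  refine hy.hasBlockDegreeLE_of_succ hP hPT hΩ hiso hn hG hGiso ?_
  obtain ⟨e, rfl⟩ := Nat.exists_eq_add_of_le hN4
  rw [show 4 + e - 1 = e + 3 by omega]
  have : e ≤ e * (m + 1) := Nat.le_mul_of_pos_right e m.succ_pos
  linarith [show 2 * (m + 1) + n j - 3 ≤ 2 * (m + 1) + e + 1 by omega]

end JacobianTripleDescent

section Centralizer

open Matrix in
theorem dotProduct_eq_zero_of_cross_eq_zero {k : Type*} [Field k] {b w g : Fin 3 → k}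
    (hwg : w ⨯₃ g = 0) (hbw : b ⬝ᵥ w = 0) (hw : w ≠ 0) : b ⬝ᵥ g = 0 := by
  have hcross := cross_cross_eq_smul_sub_smul' b w g
  rw [hwg, map_zero, dotProduct_comm w b, hbw, zero_smul, sub_zero] at hcross
  exact (smul_eq_zero.1 hcross.symm).resolve_right hw

variable {k : Type*} [Field k] {d : ℕ} {Ω : Fin d → MvPolynomial (Fin 3) k}
  {ξ : Fin d → k} {n : Fin d → ℕ} {P : ∀ i, PoissonStructure k (PQuot k (Ω i) (ξ i))}
  {PT : PoissonStructure k (⨂[k] i, PQuot k (Ω i) (ξ i))} {j : Fin d} {m : ℕ}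

theorem weightedHomogeneousComponent_blockBracket_X (hΩ : (Ω j).IsHomogeneous (n j))
    (p : MvPolynomial (Fin d × Fin 3) k) (c : Fin 3) :
    weightedHomogeneousComponent (blockWeight j) (m + (n j - 1)) (blockBracket Ω p (X (j, c))) =
      blockBracket Ω (weightedHomogeneousComponent (blockWeight j) (m + 1) p) (X (j, c)) := by
  rw [blockBracket_X_right, blockBracket_X_right, map_sum]
  refine Finset.sum_congr rfl fun i _ => ?_
  have hjac := isWeightedHomogeneous_inBlock (isHomogeneous_jacBracket_X hΩ i c) j j
  rw [if_pos rfl] at hjac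
  rw [weightedHomogeneousComponent_mul_of_isWeightedHomogeneous hjac, if_pos (Nat.le_add_left _ _),
    Nat.add_sub_cancel, weightedHomogeneousComponent_pderiv, blockWeight, if_pos rfl]

theorem weightedTotalDegree_blockBracket_X_le (hΩ : (Ω j).IsHomogeneous (n j))
    {p : MvPolynomial (Fin d × Fin 3) k} (hp : weightedTotalDegree (blockWeight j) p ≤ m + 1)
    (c : Fin 3) :
    weightedTotalDegree (blockWeight j) (blockBracket Ω p (X (j, c))) ≤ m + (n j - 1) := by
  rw [blockBracket_X_right]
  refine weightedTotalDegree_sum_le _ fun i _ => ?_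
  have hjac := weightedTotalDegree_le_of_isWeightedHomogeneous
    (isWeightedHomogeneous_inBlock (isHomogeneous_jacBracket_X hΩ i c) j j)
  have hpderiv := weightedTotalDegree_pderiv_le (j, i) hp
  rw [blockWeight, if_pos rfl, Nat.add_sub_cancel] at hpderiv
  rw [if_pos rfl] at hjac
  exact weightedTotalDegree_mul_le hpderiv hjac

open Matrix in
theorem eval_eq_zero_of_eval_blockBracket_X_eq_zero [CharZero k] (hΩ : (Ω j).IsHomogeneous (n j))
    (hiso : HasIsolatedSingularity (Ω j)) {u : MvPolynomial (Fin d × Fin 3) k}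
    (hu : u.IsWeightedHomogeneous (blockWeight j) (m + 1)) {a : Fin d → Fin 3 → k}
    (ha : eval (a j) (Ω j) = 0)
    (hbr : ∀ c, eval (Function.uncurry a) (blockBracket Ω u (X (j, c))) = 0) :
    eval (Function.uncurry a) u = 0 := by
  set g : Fin 3 → k := fun c => eval (Function.uncurry a) (pderiv (j, c) u) with hg
  set w : Fin 3 → k := fun c => eval (a j) (pderiv c (Ω j)) with hw
  have hwg : w ⨯₃ g = 0 := funext fun c => by
    rw [hw, ← sum_mul_eval_jacBracket_X, Pi.zero_apply, ← hbr c, blockBracket_X_right, map_sum]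
    simp only [map_mul, eval_inBlock, hg]
  have haw : a j ⬝ᵥ w = 0 := by
    have heuler := congrArg (eval (a j)) hΩ.sum_X_mul_pderiv
    simpa [ha, hw, dotProduct] using heuler
  have hag : a j ⬝ᵥ g = (m + 1 : ℕ) * eval (Function.uncurry a) u := by
    have heuler := congrArg (eval (Function.uncurry a))
      (sum_X_mul_pderiv_of_isWeightedHomogeneous hu)
    simpa [hg, dotProduct] using heuler
  have hag0 : a j ⬝ᵥ g = 0 := by
    by_cases hw0 : w = 0
    · rw [eq_zero_of_eval_pderiv_eq_zero hΩ hiso (congrFun hw0), zero_dotProduct]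
    · exact dotProduct_eq_zero_of_cross_eq_zero hwg haw hw0
  exact (mul_eq_zero.1 (hag.symm.trans hag0)).resolve_left (Nat.cast_ne_zero.2 m.succ_ne_zero)

theorem hasBlockDegreeLE_zero_of_bracket_eq_zero [CharZero k] [IsAlgClosed k]
    (hP : ∀ i, IsInducedBracket (Ω i) (ξ i) (P i)) (hPT : IsPiTensorBracket P PT)
    (hΩ : ∀ i, (Ω i).IsHomogeneous (n i)) (hiso : ∀ i, HasIsolatedSingularity (Ω i))
    (hn : n j ≠ 0) {x : ⨂[k] i, PQuot k (Ω i) (ξ i)}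
    (hx : ∀ c, PT.bracket x (generator Ω ξ j c) = 0) : HasBlockDegreeLE Ω ξ j 0 x := by
  refine hasBlockDegreeLE_of_descent (y := fun _ : Unit => x) 0 (fun m _ hm _ => ?_) ()
  obtain ⟨p, rfl, hp⟩ := hm ()
  refine hasBlockDegreeLE_of_eval_eq_zero hΩ hiso hn hp fun a ha => ?_
  refine eval_eq_zero_of_eval_blockBracket_X_eq_zero (hΩ j) (hiso j)
    (weightedHomogeneousComponent_isWeightedHomogeneous (m + 1) p)
    ((ha j).trans (Function.update_self ..)) fun c => ?_
  have hmem : blockBracket Ω p (X (j, c)) ∈ fiberIdeal Ω ξ := by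
    rw [← sub_zero (blockBracket _ _ _), ← presentation_eq_iff, map_zero,
      ← bracket_presentation hP hPT]
    exact hx c
  rw [← weightedHomogeneousComponent_blockBracket_X (hΩ j)]
  exact eval_weightedHomogeneousComponent_eq_zero (hΩ j) (hiso j) hn hmem
    (weightedTotalDegree_blockBracket_X_le (hΩ j) hp c) ha

end Centralizer

/-! ### Poisson endomorphisms -/

section BlockSpan

theorem algHom_mem_span_of_totalDegree_le_one {σ k A : Type*} [CommSemiring k] [Semiring A]
    [Algebra k A] (φ : MvPolynomial σ k →ₐ[k] A) {p : MvPolynomial σ k}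
    (hp : p.totalDegree ≤ 1) :
    φ p ∈ Submodule.span k (insert 1 (Set.range fun i => φ (X i))) := by
  rw [p.as_sum, map_sum]
  refine Submodule.sum_mem _ fun s hs => ?_
  rw [← mul_one (coeff s p), ← smul_eq_mul, ← smul_monomial, map_smul]
  refine Submodule.smul_mem _ _ (Submodule.subset_span ?_)
  have hdeg : s.degree ≤ 1 := (le_totalDegree hs).trans hp
  obtain hs0 | hs1 := Nat.le_one_iff_eq_zero_or_eq_one.1 hdeg
  · rw [(Finsupp.degree_eq_zero_iff s).1 hs0]
    exact Or.inl (map_one φ)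
  · obtain ⟨i, rfl⟩ := (Finsupp.sum_eq_one_iff s).1 hs1
    exact Or.inr ⟨i, rfl⟩

variable {k ι : Type*} [Field k] [DecidableEq ι] (Ω : ι → MvPolynomial (Fin 3) k) (ξ : ι → k)

/-- The affine-linear functions in the coordinates of the `i`-th tensor factor. -/
noncomputable def blockSpan (i : ι) : Submodule k (⨂[k] i, PQuot k (Ω i) (ξ i)) :=
  Submodule.span k (insert 1 (Set.range (generator Ω ξ i)))

instance finiteDimensional_blockSpan (i : ι) : FiniteDimensional k (blockSpan Ω ξ i) :=
  FiniteDimensional.span_of_finite k ((Set.finite_range _).insert 1)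

theorem generator_mem_blockSpan (i : ι) (c : Fin 3) : generator Ω ξ i c ∈ blockSpan Ω ξ i :=
  Submodule.subset_span (Or.inr ⟨c, rfl⟩)

variable {Ω ξ} {n : ι → ℕ} {i j : ι} {p : MvPolynomial (ι × Fin 3) k}

theorem HasBlockDegreeLE.eval_update_eq [Finite ι]
    (hp : HasBlockDegreeLE Ω ξ j 0 (presentation Ω ξ p)) {a : ι → Fin 3 → k}
    (ha : ∀ l, eval (a l) (Ω l) = ξ l) {b : Fin 3 → k} (hb : eval b (Ω j) = ξ j) :
    eval (Function.uncurry (Function.update a j b)) p = eval (Function.uncurry a) p := by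
  obtain ⟨q, hqp, hq⟩ := hp
  have heval : ∀ a' : ι → Fin 3 → k, (∀ l, eval (a' l) (Ω l) = ξ l) →
      eval (Function.uncurry a') q = eval (Function.uncurry a') p := fun a' ha' => by
    rw [← sub_eq_zero, ← map_sub]
    exact eval_eq_zero_of_mem_fiberIdeal (presentation_eq_iff.1 hqp) ha'
  have hab : ∀ l, eval (Function.update a j b l) (Ω l) = ξ l := fun l => by
    obtain rfl | hl := eq_or_ne l j
    · rwa [Function.update_self]
    · rw [Function.update_of_ne hl, ha]
  rw [← heval _ hab, ← heval a ha, eval_update_of_weightedTotalDegree_eq_zero a hq]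

theorem eval_piecewise_eq [Finite ι] {s : Finset ι}
    (hp : ∀ j ∈ s, HasBlockDegreeLE Ω ξ j 0 (presentation Ω ξ p)) {a b : ι → Fin 3 → k}
    (ha : ∀ l, eval (a l) (Ω l) = ξ l) (hb : ∀ l, eval (b l) (Ω l) = ξ l) :
    eval (Function.uncurry (s.piecewise b a)) p = eval (Function.uncurry a) p := by
  induction s using Finset.induction_on with
  | empty => rw [Finset.piecewise_empty]
  | insert j s _ ih =>
    have hab : ∀ l, eval (s.piecewise b a l) (Ω l) = ξ l := fun l =>
      s.piecewise_cases b a (fun v => eval v (Ω l) = ξ l) (hb l) (ha l)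
    rw [Finset.piecewise_insert,
      (hp j (Finset.mem_insert_self j s)).eval_update_eq hab (hb j),
      ih fun l hl => hp l (Finset.mem_insert_of_mem hl)]

theorem mem_blockSpan_of_hasBlockDegreeLE [Finite ι] [IsAlgClosed k]
    (hΩ : ∀ i, (Ω i).IsHomogeneous (n i)) (hiso : ∀ i, HasIsolatedSingularity (Ω i))
    (hn : ∀ i, n i ≠ 0) {x : ⨂[k] i, PQuot k (Ω i) (ξ i)} (hi : HasBlockDegreeLE Ω ξ i 1 x)
    (hj : ∀ j ≠ i, HasBlockDegreeLE Ω ξ j 0 x) : x ∈ blockSpan Ω ξ i := by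
  cases nonempty_fintype ι
  choose a₀ ha₀ using fun l =>
    exists_eval_eq (hΩ l) (potential_ne_zero (hiso l)) (hn l) (ξ l)
  obtain ⟨p, rfl, hp⟩ := hi
  have hfreeze : presentation Ω ξ p = presentation Ω ξ (inBlock i (freeze i a₀ p)) := by
    rw [presentation_eq_iff, mem_fiberIdeal_iff hΩ hiso]
    intro a ha
    rw [map_sub, eval_inBlock, eval_freeze, ← Finset.piecewise_erase_univ,
      eval_piecewise_eq (fun j hjs => hj j (Finset.ne_of_mem_erase hjs)) ha ha₀, sub_self]
  have hgen : generator Ω ξ i = fun c => (presentation Ω ξ).comp (inBlock i) (X c) :=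
    funext fun c => by rw [AlgHom.comp_apply, rename_X, generator]
  rw [hfreeze, blockSpan, hgen]
  exact algHom_mem_span_of_totalDegree_le_one _ (totalDegree_freeze_le a₀ hp)

theorem surjOn_blockSpan
    {f : (⨂[k] i, PQuot k (Ω i) (ξ i)) →ₐ[k] ⨂[k] i, PQuot k (Ω i) (ξ i)}
    (hinj : Function.Injective f) (hf : ∀ c, f (generator Ω ξ i c) ∈ blockSpan Ω ξ i) :
    Set.SurjOn f (blockSpan Ω ξ i) (blockSpan Ω ξ i) := by
  have hle : blockSpan Ω ξ i ≤ (blockSpan Ω ξ i).comap f.toLinearMap := by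
    refine Submodule.span_le.2 (Set.insert_subset ?_ (Set.range_subset_iff.2 hf))
    change f 1 ∈ blockSpan Ω ξ i
    rw [map_one]
    exact Submodule.subset_span (Set.mem_insert 1 _)
  exact (LinearMap.injOn_iff_surjOn (f := f.toLinearMap) hle).1 hinj.injOn

end BlockSpan

section Endomorphism

variable {k : Type*} [Field k] {d : ℕ} {Ω : Fin d → MvPolynomial (Fin 3) k}
  {ξ : Fin d → k} {n : Fin d → ℕ} {P : ∀ i, PoissonStructure k (PQuot k (Ω i) (ξ i))}
  {PT : PoissonStructure k (⨂[k] i, PQuot k (Ω i) (ξ i))} {i j : Fin d}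
  {f : (⨂[k] i, PQuot k (Ω i) (ξ i)) →ₐ[k] ⨂[k] i, PQuot k (Ω i) (ξ i)}

theorem bracket_generator_of_mem_blockSpan (hP : ∀ i, IsInducedBracket (Ω i) (ξ i) (P i))
    (hPT : IsPiTensorBracket P PT) (hij : i ≠ j) (c : Fin 3)
    {x : ⨂[k] i, PQuot k (Ω i) (ξ i)} (hx : x ∈ blockSpan Ω ξ j) :
    PT.bracket (generator Ω ξ i c) x = 0 := by
  suffices blockSpan Ω ξ j ≤ (hamiltonian PT (generator Ω ξ i c)).toLinearMap.ker from this hx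
  refine Submodule.span_le.2 (Set.insert_subset (bracket_one_right PT _) ?_)
  rintro _ ⟨c', rfl⟩
  refine (bracket_presentation_X hP hPT _ _).trans ?_
  rw [coordinateBracket, if_neg hij, map_zero]

theorem map_generator_mem_blockSpan [CharZero k] [IsAlgClosed k]
    (hP : ∀ i, IsInducedBracket (Ω i) (ξ i) (P i)) (hPT : IsPiTensorBracket P PT)
    (hΩ : ∀ i, (Ω i).IsHomogeneous (n i)) (hiso : ∀ i, HasIsolatedSingularity (Ω i))
    (hn : ∀ i, 4 ≤ n i) (hdist : Function.Injective n) (hf : IsPoissonHom PT PT f)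
    (hsurj : ∀ j, n i < n j → Set.SurjOn f (blockSpan Ω ξ j) (blockSpan Ω ξ j)) (c : Fin 3) :
    f (generator Ω ξ i c) ∈ blockSpan Ω ξ i := by
  have hn3 : ∀ j, 3 ≤ n j := fun j => Nat.le_of_succ_le (hn j)
  have hn0 : ∀ j, n j ≠ 0 := fun j => Nat.ne_zero_of_lt (hn j)
  have hy : IsJacobianTriple PT (Ω i) (f ∘ generator Ω ξ i) :=
    (isJacobianTriple_generator hP hPT i).map hf
  refine mem_blockSpan_of_hasBlockDegreeLE hΩ hiso hn0
    (hy.hasBlockDegreeLE_one hP hPT hΩ hiso (hn3 i) (hΩ i) (hiso i) le_rfl (hn i) c)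
    fun j hji => ?_
  obtain hlt | hlt := (hdist.ne hji).lt_or_gt
  · exact hy.hasBlockDegreeLE_zero hP hPT hΩ hiso (hn3 j) (hΩ i) (hiso i) hlt c
  · refine hasBlockDegreeLE_zero_of_bracket_eq_zero hP hPT hΩ hiso (hn0 j) fun c' => ?_
    obtain ⟨y, hy, hfy⟩ := hsurj j hlt (generator_mem_blockSpan Ω ξ j c')
    rw [← hfy, ← hf, bracket_generator_of_mem_blockSpan hP hPT hji.symm c hy, map_zero]

theorem surjOn_blockSpan_of_injective [CharZero k] [IsAlgClosed k]
    (hP : ∀ i, IsInducedBracket (Ω i) (ξ i) (P i)) (hPT : IsPiTensorBracket P PT)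
    (hΩ : ∀ i, (Ω i).IsHomogeneous (n i)) (hiso : ∀ i, HasIsolatedSingularity (Ω i))
    (hn : ∀ i, 4 ≤ n i) (hdist : Function.Injective n) (hf : IsPoissonHom PT PT f)
    (hinj : Function.Injective f) (i : Fin d) :
    Set.SurjOn f (blockSpan Ω ξ i) (blockSpan Ω ξ i) := by
  induction i using (Finite.wellFounded_of_trans_of_irrefl (n ⁻¹'o (· > ·))).induction with
  | _ i ih =>
    exact surjOn_blockSpan hinj (map_generator_mem_blockSpan hP hPT hΩ hiso hn hdist hf ih)

theorem surjective_of_surjOn_blockSpan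
    (hf : ∀ i, Set.SurjOn f (blockSpan Ω ξ i) (blockSpan Ω ξ i)) : Function.Surjective f := by
  choose y _ hy using fun v : Fin d × Fin 3 => hf v.1 (generator_mem_blockSpan Ω ξ v.1 v.2)
  have hcomp : f.comp (aeval (R := k) y) = presentation Ω ξ :=
    MvPolynomial.algHom_ext fun v => by rw [AlgHom.comp_apply, aeval_X, hy, generator]
  refine Function.Surjective.of_comp (g := aeval (R := k) y) ?_
  rw [← AlgHom.coe_comp, hcomp]
  exact presentation_surjective Ω ξ

end Endomorphism

end TensorDixmier

open PiTensorProduct TensorDixmier in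
theorem tensorProduct_of_potentials_isDixmier_general
    {𝕜 : Type*} [Field 𝕜] [IsAlgClosed 𝕜] [CharZero 𝕜]
    (d : ℕ) (Ω : Fin d → MvPolynomial (Fin 3) 𝕜) (n : Fin d → ℕ)
    (hhom : ∀ i, (Ω i).IsHomogeneous (n i))
    (hiso : ∀ i, HasIsolatedSingularity (Ω i))
    (hdeg : ∀ i, 4 ≤ n i)
    (hdist : Function.Injective n)
    (ξ : Fin d → 𝕜)
    (P : ∀ i, PoissonStructure 𝕜 (PQuot 𝕜 (Ω i) (ξ i)))
    (hP : ∀ i, IsInducedBracket (Ω i) (ξ i) (P i))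
    (PT : PoissonStructure 𝕜 (⨂[𝕜] i, PQuot 𝕜 (Ω i) (ξ i)))
    (hPT : IsPiTensorBracket P PT) :
    IsDixmier 𝕜 (⨂[𝕜] i, PQuot 𝕜 (Ω i) (ξ i)) PT := fun _ hf hinj =>
  ⟨hinj, surjective_of_surjOn_blockSpan
    (surjOn_blockSpan_of_injective hP hPT hhom hiso hdeg hdist hf hinj)⟩

open PiTensorProduct in
/-- Theorem 0.2(1): the tensor product of the `P_{Ωᵢ-ξᵢ}` for i.s. potentials `Ωᵢ` of pairwise
distinct degrees `≥ 5` is Dixmier. -/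
theorem tensorProduct_of_potentials_isDixmier
    {𝕜 : Type*} [Field 𝕜] [IsAlgClosed 𝕜] [CharZero 𝕜]
    (d : ℕ) (Ω : Fin d → MvPolynomial (Fin 3) 𝕜) (n : Fin d → ℕ)
    (hhom : ∀ i, (Ω i).IsHomogeneous (n i))
    (hiso : ∀ i, HasIsolatedSingularity (Ω i))
    (hdeg : ∀ i, 5 ≤ n i)
    (hdist : Function.Injective n)
    (ξ : Fin d → 𝕜)
    (P : ∀ i, PoissonStructure 𝕜 (PQuot 𝕜 (Ω i) (ξ i)))
    (hP : ∀ i, IsInducedBracket (Ω i) (ξ i) (P i))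
    (PT : PoissonStructure 𝕜 (⨂[𝕜] i, PQuot 𝕜 (Ω i) (ξ i)))
    (hPT : IsPiTensorBracket P PT) :
    IsDixmier 𝕜 (⨂[𝕜] i, PQuot 𝕜 (Ω i) (ξ i)) PT := by
  exact tensorProduct_of_potentials_isDixmier_general d Ω n hhom hiso
    (fun i => Nat.le_of_succ_le (hdeg i)) hdist ξ P hP PT hPT
end

section
/- Let 𝕜 be an algebraically closed field of characteristic zero. Let Ω ∈ 𝕜[x,y,z] be a homogeneous polynomial of degree at least 4 with an isolated singularity, ξ ∈ 𝕜, and let K be a commutative 𝕜-algebra which is a field equipped with a Poisson bracket (a Poisson field over 𝕜). Then every injective K-algebra endomorphism of K ⊗_𝕜 P_{Ω−ξ} (with the tensor Poisson bracket) which preserves the Poisson bracket is bijective. -/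
open scoped TensorProduct

/-!
Write `W` for `Ω` over `K` and `c` for the image of `ξ`. An endomorphism `g` lifts to a triple `f`
of polynomials over `K`, and preservation of the bracket gives `(∂ᵢW)(f) ≡ {fᵢ₊₁, fᵢ₊₂}` modulo
`W - c`, with indices modulo `3`. Suppose the `fᵢ` have degree at most `N`, where `N ≥ 2`, and let
`aᵢ` be their components of degree `N`. Since `d ≥ 4`, the bound `(d - 1)N` for the degree of the
left side exceeds the bound `2(N - 1) + (d - 1)` for the right side, so taking components of degree
`(d - 1)N` shows that `W` divides every `(∂ᵢW)(a)`. The singularity being isolated, some power of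
each coordinate lies in the gradient ideal of `W`, so `W` divides a power of each `aᵢ`. Moreover `W`
is squarefree, because a repeated factor divides all the partial derivatives, hence a power of each
coordinate, and so is a unit. Thus `W` divides each `aᵢ`, and modulo `W - c` the lift can be
replaced by one of degree less than `N`.

Hence `g` has a lift of degree at most `1`, and so preserves the image of the polynomials of degree
at most `1`. This space is finite-dimensional and generates the algebra, so an injective `g` maps it
onto itself and is surjective.
-/

section LeadingForms

open MvPolynomial

variable {σ τ R : Type*}

section CommSemiring

variable [CommSemiring R]

lemma homogeneousComponent_mul_of_totalDegree_le {p q : MvPolynomial σ R} {m n : ℕ}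
    (hp : p.totalDegree ≤ m) (hq : q.totalDegree ≤ n) :
    homogeneousComponent (m + n) (p * q) =
      homogeneousComponent m p * homogeneousComponent n q := by
  classical
  ext s
  by_cases hs : s.degree = m + n
  · rw [coeff_homogeneousComponent, if_pos hs, coeff_mul, coeff_mul]
    refine Finset.sum_congr rfl fun ⟨u, v⟩ huv => ?_
    have hdeg : u.degree + v.degree = m + n := by
      rw [← map_add, Finset.HasAntidiagonal.mem_antidiagonal.1 huv, hs]
    simp only [coeff_homogeneousComponent]
    rcases lt_trichotomy u.degree m with hu | hu | hu
    · have hv : n < v.degree := by omega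
      rw [if_neg hu.ne, coeff_eq_zero_of_totalDegree_lt (hq.trans_lt hv), mul_zero, zero_mul]
    · rw [if_pos hu, if_pos (by omega)]
    · rw [if_neg hu.ne', coeff_eq_zero_of_totalDegree_lt (hp.trans_lt hu), zero_mul, zero_mul]
  · rw [coeff_homogeneousComponent, if_neg hs]
    exact (((homogeneousComponent_isHomogeneous m p).mul
      (homogeneousComponent_isHomogeneous n q)).coeff_eq_zero hs).symm

lemma homogeneousComponent_pow_of_totalDegree_le {p : MvPolynomial σ R} {n : ℕ}
    (hp : p.totalDegree ≤ n) (k : ℕ) :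
    homogeneousComponent (k * n) (p ^ k) = homogeneousComponent n p ^ k := by
  induction k with
  | zero => simp [homogeneousComponent_zero]
  | succ k ih =>
    have hpk : (p ^ k).totalDegree ≤ k * n :=
      (totalDegree_pow p k).trans (Nat.mul_le_mul_left k hp)
    rw [pow_succ, pow_succ, Nat.succ_mul, homogeneousComponent_mul_of_totalDegree_le hpk hp, ih]

lemma homogeneousComponent_prod_of_totalDegree_le {ι : Type*} (t : Finset ι)
    {p : ι → MvPolynomial σ R} {n : ι → ℕ} (hp : ∀ i ∈ t, (p i).totalDegree ≤ n i) :
    homogeneousComponent (∑ i ∈ t, n i) (∏ i ∈ t, p i) =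
      ∏ i ∈ t, homogeneousComponent (n i) (p i) := by
  classical
  induction t using Finset.induction_on with
  | empty => simp [homogeneousComponent_zero]
  | insert i t hi ih =>
    have hp' : ∀ j ∈ t, (p j).totalDegree ≤ n j := fun j hj => hp j (Finset.mem_insert_of_mem hj)
    have hprod : (∏ j ∈ t, p j).totalDegree ≤ ∑ j ∈ t, n j :=
      (totalDegree_finsetProd t p).trans (Finset.sum_le_sum hp')
    rw [Finset.sum_insert hi, Finset.prod_insert hi, Finset.prod_insert hi,
      homogeneousComponent_mul_of_totalDegree_le (hp i (Finset.mem_insert_self i t)) hprod, ih hp']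

lemma homogeneousComponent_aeval_of_totalDegree_le {p : MvPolynomial σ R}
    {f : σ → MvPolynomial τ R} {d n : ℕ} (hp : p.IsHomogeneous d)
    (hf : ∀ i, (f i).totalDegree ≤ n) :
    homogeneousComponent (d * n) (aeval f p) =
      aeval (fun i => homogeneousComponent n (f i)) p := by
  rw [aeval_def, aeval_def, eval₂_eq, eval₂_eq, map_sum]
  refine Finset.sum_congr rfl fun s hs => ?_
  have hdeg : d * n = ∑ i ∈ s.support, s i * n := by
    rw [← Finset.sum_mul]
    exact congrArg (· * n) (hp.degree_eq_sum_deg_support hs)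
  rw [algebraMap_eq, homogeneousComponent_C_mul, hdeg,
    homogeneousComponent_prod_of_totalDegree_le _ fun i _ =>
      (totalDegree_pow (f i) (s i)).trans (Nat.mul_le_mul_left _ (hf i))]
  simp only [homogeneousComponent_pow_of_totalDegree_le (hf _)]

lemma totalDegree_aeval_le {f : σ → MvPolynomial τ R} {n : ℕ}
    (hf : ∀ i, (f i).totalDegree ≤ n) (p : MvPolynomial σ R) :
    (aeval f p).totalDegree ≤ p.totalDegree * n := by
  rw [aeval_def, eval₂_eq]
  refine totalDegree_finsetSum_le fun s hs => ?_
  calc (algebraMap R _ (coeff s p) * ∏ i ∈ s.support, f i ^ s i).totalDegree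
      ≤ 0 + ∑ i ∈ s.support, s i * n := by
        refine (totalDegree_mul _ _).trans (add_le_add (totalDegree_C _).le ?_)
        exact (totalDegree_finsetProd _ _).trans (Finset.sum_le_sum fun i _ =>
          (totalDegree_pow (f i) (s i)).trans (Nat.mul_le_mul_left _ (hf i)))
    _ = s.degree * n := by rw [zero_add, ← Finset.sum_mul]; rfl
    _ ≤ p.totalDegree * n := Nat.mul_le_mul_right n (le_totalDegree hs)

lemma totalDegree_pderiv_le (i : σ) (p : MvPolynomial σ R) :
    (pderiv i p).totalDegree ≤ p.totalDegree - 1 := by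
  refine Finset.sup_le fun s hs => ?_
  have hs' : s + Finsupp.single i 1 ∈ p.support := by
    rw [mem_support_iff, coeff_pderiv] at hs
    exact mem_support_iff.2 (left_ne_zero_of_mul hs)
  have hdeg : (s + Finsupp.single i 1).degree ≤ p.totalDegree := le_totalDegree hs'
  rw [map_add, Finsupp.degree_single] at hdeg
  exact Nat.le_sub_of_add_le hdeg

end CommSemiring

section CommRing

variable [CommRing R]

lemma totalDegree_sub_homogeneousComponent_le {p : MvPolynomial σ R} {n : ℕ}
    (hp : p.totalDegree ≤ n + 1) : (p - homogeneousComponent (n + 1) p).totalDegree ≤ n := by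
  refine Finset.sup_le fun s hs => ?_
  change s.degree ≤ n
  rw [mem_support_iff, coeff_sub, coeff_homogeneousComponent] at hs
  split_ifs at hs with hdeg
  · simp at hs
  · have hs' : s.degree ≤ p.totalDegree := le_totalDegree (mem_support_iff.2 (by simpa using hs))
    omega

variable [IsDomain R]

lemma homogeneousComponent_totalDegree_dvd_of_dvd {p q : MvPolynomial σ R} {n : ℕ}
    (hqp : q ∣ p) (hp : p.totalDegree ≤ n) :
    homogeneousComponent q.totalDegree q ∣ homogeneousComponent n p := by
  obtain ⟨r, rfl⟩ := hqp
  rcases eq_or_ne (q * r) 0 with h | h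
  · rw [h, map_zero]
    exact dvd_zero _
  · rw [totalDegree_mul_of_isDomain (left_ne_zero_of_mul h) (right_ne_zero_of_mul h)] at hp
    obtain ⟨k, rfl⟩ := Nat.exists_eq_add_of_le ((Nat.le_add_right _ _).trans hp)
    rw [homogeneousComponent_mul_of_totalDegree_le le_rfl (Nat.le_of_add_le_add_left hp)]
    exact dvd_mul_right _ _

variable {W : MvPolynomial σ R} {d n : ℕ} {c : R} {p : MvPolynomial σ R}

lemma dvd_homogeneousComponent_of_sub_C_dvd (hW : W.IsHomogeneous d) (hW0 : W ≠ 0) (hd : 0 < d)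
    (hdvd : W - C c ∣ p) (hp : p.totalDegree ≤ n) : W ∣ homogeneousComponent n p := by
  have hdeg : (W - C c).totalDegree = d := by
    rw [sub_eq_add_neg, ← C_neg, totalDegree_add_eq_left_of_totalDegree_lt,
      hW.totalDegree hW0]
    rwa [totalDegree_C, hW.totalDegree hW0]
  have hlead : homogeneousComponent d (W - C c) = W := by
    rw [map_sub, homogeneousComponent_eq_self hW,
      homogeneousComponent_eq_zero d (C c) (by rwa [totalDegree_C]), sub_zero]
  simpa only [hdeg, hlead] using homogeneousComponent_totalDegree_dvd_of_dvd hdvd hp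

-- Subtracting a multiple of `W - c` trades the leading form `W * q` of `p` for `c * q`.
lemma exists_totalDegree_le_of_dvd_homogeneousComponent (hW : W.IsHomogeneous d) (hW0 : W ≠ 0)
    (hd : 0 < d) (c : R) (hp : p.totalDegree ≤ n + 1)
    (hdvd : W ∣ homogeneousComponent (n + 1) p) :
    ∃ p' : MvPolynomial σ R, p'.totalDegree ≤ n ∧ W - C c ∣ p - p' := by
  obtain ⟨q, hq⟩ := hdvd
  have hqdeg : q.totalDegree ≤ n := by
    rcases eq_or_ne q 0 with rfl | hq0
    · simp
    · have hle := (homogeneousComponent_isHomogeneous (n + 1) p).totalDegree_le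
      rw [hq, totalDegree_mul_of_isDomain hW0 hq0, hW.totalDegree hW0] at hle
      omega
  refine ⟨p - homogeneousComponent (n + 1) p + C c * q, ?_, q, by rw [hq]; ring⟩
  refine (totalDegree_add _ _).trans (max_le (totalDegree_sub_homogeneousComponent_le hp) ?_)
  exact (totalDegree_mul _ _).trans (by rwa [totalDegree_C, zero_add])

end CommRing

end LeadingForms

section GradientIdeal

open MvPolynomial

attribute [local instance] MvPolynomial.gradedAlgebra

variable {σ R S : Type*} [CommRing R] [CommRing S]

/-- The ideal generated by the partial derivatives of a polynomial `W`, whose zero locus is the set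
of critical points of `W`; the isolated-singularity condition is a condition on this ideal. -/
noncomputable def gradientIdeal (W : MvPolynomial σ R) : Ideal (MvPolynomial σ R) :=
  Ideal.span (Set.range fun i => pderiv i W)

lemma gradientIdeal_le_iff {W : MvPolynomial σ R} {I : Ideal (MvPolynomial σ R)} :
    gradientIdeal W ≤ I ↔ ∀ i, pderiv i W ∈ I := by
  rw [gradientIdeal, Ideal.span_le, Set.range_subset_iff]
  rfl

lemma map_gradientIdeal (φ : R →+* S) (W : MvPolynomial σ R) :
    (gradientIdeal W).map (map φ) = gradientIdeal (map φ W) := by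
  simp only [gradientIdeal, Ideal.map_span, ← Set.range_comp, Function.comp_def, pderiv_map]

lemma isHomogeneous_gradientIdeal {W : MvPolynomial σ R} {d : ℕ} (hW : W.IsHomogeneous d) :
    (gradientIdeal W).IsHomogeneous (homogeneousSubmodule σ R) := by
  apply Ideal.homogeneous_span
  rintro _ ⟨i, rfl⟩
  exact ⟨d - 1, hW.pderiv⟩

lemma X_mem_radical_gradientIdeal_map {W : MvPolynomial σ R} {i : σ} (φ : R →+* S)
    (hX : X i ∈ (gradientIdeal W).radical) : X i ∈ (gradientIdeal (map φ W)).radical := by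
  have h := Ideal.map_radical_le (map φ) (Ideal.mem_map_of_mem (map φ) hX)
  rwa [map_X, map_gradientIdeal] at h

-- An integral equation for `X i` modulo a homogeneous ideal has its leading term in the ideal.
lemma X_mem_radical_of_isIntegral_quotient {I : Ideal (MvPolynomial σ R)}
    (hI : I.IsHomogeneous (homogeneousSubmodule σ R))
    [Algebra.IsIntegral R (MvPolynomial σ R ⧸ I)] (i : σ) : X i ∈ I.radical := by
  obtain ⟨p, hp, hroot⟩ :=
    Algebra.IsIntegral.isIntegral (R := R) (Ideal.Quotient.mkₐ R I (X i))
  have hmem : Polynomial.aeval (X i : MvPolynomial σ R) p ∈ I := by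
    rw [← Ideal.Quotient.eq_zero_iff_mem, ← Ideal.Quotient.mkₐ_eq_mk R,
      ← Polynomial.aeval_algHom_apply]
    exact hroot
  have hlead : homogeneousComponent p.natDegree (Polynomial.aeval (X i : MvPolynomial σ R) p) =
      X i ^ p.natDegree := by
    rw [Polynomial.aeval_eq_sum_range, map_sum, Finset.sum_eq_single p.natDegree]
    · rw [hp.coeff_natDegree, one_smul, homogeneousComponent_eq_self (isHomogeneous_X_pow i _)]
    · intro k _ hk
      rw [map_smul, homogeneousComponent_of_mem (isHomogeneous_X_pow i k), if_neg hk.symm,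
        smul_zero]
    · simp
  exact ⟨p.natDegree, hlead ▸ homogeneousComponent_mem_of_mem hI hmem _⟩

lemma gradientIdeal_le_span_singleton {W p : MvPolynomial σ R} (h : p * p ∣ W) :
    gradientIdeal W ≤ Ideal.span {p} := by
  obtain ⟨q, rfl⟩ := h
  refine gradientIdeal_le_iff.2 fun i => Ideal.mem_span_singleton.2 ?_
  rw [pderiv_mul, pderiv_mul]
  exact ⟨(pderiv i p + pderiv i p) * q + p * pderiv i q, by ring⟩

lemma squarefree_of_X_mem_radical_gradientIdeal [IsDomain R] [Nontrivial σ]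
    {W : MvPolynomial σ R} (hX : ∀ i, X i ∈ (gradientIdeal W).radical) : Squarefree W := by
  intro p hp
  have hdvd : ∀ i, ∃ m, p ∣ X i ^ m := fun i => by
    obtain ⟨m, hm⟩ := hX i
    exact ⟨m, Ideal.mem_span_singleton.1 (gradientIdeal_le_span_singleton hp hm)⟩
  obtain ⟨i, j, hij⟩ := exists_pair_ne σ
  obtain ⟨⟨m, hm⟩, ⟨n, hn⟩⟩ := hdvd i, hdvd j
  have hXi : Prime (X i : MvPolynomial σ R) := X_prime
  obtain ⟨k, -, hk⟩ := (dvd_prime_pow hXi m).1 hm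
  rcases k.eq_zero_or_pos with rfl | hpos
  · exact hk.isUnit_iff.2 (by simp)
  · have hij' : (X i : MvPolynomial σ R) ∣ X j :=
      hXi.dvd_of_dvd_pow (((dvd_pow_self _ hpos.ne').trans hk.dvd').trans hn)
    exact absurd (X_dvd_X.1 hij') hij

lemma dvd_of_forall_dvd_aeval_pderiv [IsDomain R] [UniqueFactorizationMonoid R] [Nontrivial σ]
    {W : MvPolynomial σ R} {f : σ → MvPolynomial σ R}
    (hX : ∀ i, X i ∈ (gradientIdeal W).radical) (hf : ∀ i, W ∣ aeval f (pderiv i W)) (i : σ) :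
    W ∣ f i := by
  have hle : gradientIdeal W ≤ (Ideal.span {W}).comap (aeval f : _ →ₐ[R] _) :=
    gradientIdeal_le_iff.2 fun j => Ideal.mem_span_singleton.2 (hf j)
  obtain ⟨m, hm⟩ := hX i
  have hpow : aeval f (X i ^ m) ∈ Ideal.span {W} := hle hm
  rw [map_pow, aeval_X, Ideal.mem_span_singleton] at hpow
  exact (squarefree_of_X_mem_radical_gradientIdeal hX).isRadical m (f i) hpow

end GradientIdeal

section JacobianBracket

open MvPolynomial

variable {R S : Type*} [CommRing R] [CommRing S]

lemma jacBracket_eq (W f g : MvPolynomial (Fin 3) R) : jacBracket W f g =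
    (pderiv 0 f * pderiv 1 g - pderiv 1 f * pderiv 0 g) * pderiv 2 W +
    (pderiv 1 f * pderiv 2 g - pderiv 2 f * pderiv 1 g) * pderiv 0 W +
    (pderiv 2 f * pderiv 0 g - pderiv 0 f * pderiv 2 g) * pderiv 1 W := by
  simp only [jacBracket, Matrix.det_fin_three, Matrix.of_apply, Matrix.cons_val]
  ring

lemma jacBracket_neg_swap (W f g : MvPolynomial (Fin 3) R) :
    -jacBracket W g f = jacBracket W f g := by
  rw [jacBracket_eq, jacBracket_eq]
  ring

lemma jacBracket_add_right (W f g h : MvPolynomial (Fin 3) R) :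
    jacBracket W f (g + h) = jacBracket W f g + jacBracket W f h := by
  simp only [jacBracket_eq, map_add]
  ring

lemma jacBracket_mul_right (W f g h : MvPolynomial (Fin 3) R) :
    jacBracket W f (g * h) = jacBracket W f g * h + g * jacBracket W f h := by
  simp only [jacBracket_eq, pderiv_mul]
  ring

lemma jacBracket_C_right (W f : MvPolynomial (Fin 3) R) (c : R) : jacBracket W f (C c) = 0 := by
  simp [jacBracket_eq]

lemma jacBracket_X_add_one_X_add_two (W : MvPolynomial (Fin 3) R) (i : Fin 3) :
    jacBracket W (X (i + 1)) (X (i + 2)) = pderiv i W := by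
  fin_cases i <;> simp [jacBracket_eq, pderiv_X]

lemma map_jacBracket (φ : R →+* S) (W f g : MvPolynomial (Fin 3) R) :
    map φ (jacBracket W f g) = jacBracket (map φ W) (map φ f) (map φ g) := by
  simp only [jacBracket_eq, pderiv_map, map_add, map_sub, map_mul]

lemma totalDegree_jacBracket_le (W f g : MvPolynomial (Fin 3) R) :
    (jacBracket W f g).totalDegree ≤
      (f.totalDegree - 1) + (g.totalDegree - 1) + (W.totalDegree - 1) := by
  have hprod : ∀ i j, (pderiv i f * pderiv j g).totalDegree ≤
      (f.totalDegree - 1) + (g.totalDegree - 1) := fun i j =>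
    (totalDegree_mul _ _).trans
      (add_le_add (totalDegree_pderiv_le i f) (totalDegree_pderiv_le j g))
  have hterm : ∀ i j k,
      ((pderiv i f * pderiv j g - pderiv j f * pderiv i g) * pderiv k W).totalDegree ≤
        (f.totalDegree - 1) + (g.totalDegree - 1) + (W.totalDegree - 1) := fun i j k =>
    (totalDegree_mul _ _).trans (add_le_add
      ((totalDegree_sub _ _).trans (max_le (hprod i j) (hprod j i))) (totalDegree_pderiv_le k W))
  rw [jacBracket_eq]
  exact (totalDegree_add _ _).trans
    (max_le ((totalDegree_add _ _).trans (max_le (hterm 0 1 2) (hterm 1 2 0))) (hterm 2 0 1))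

end JacobianBracket

namespace HasIsolatedSingularity

open MvPolynomial

variable {𝕜 : Type*} [Field 𝕜] {Ω : MvPolynomial (Fin 3) 𝕜}

lemma finiteDimensional_quotient_gradientIdeal (hΩ : HasIsolatedSingularity Ω) :
    FiniteDimensional 𝕜 (MvPolynomial (Fin 3) 𝕜 ⧸ gradientIdeal Ω) := by
  have hrange : Set.range (fun i => pderiv i Ω) = {pderiv 0 Ω, pderiv 1 Ω, pderiv 2 Ω} := by
    ext p
    simp [Fin.exists_fin_succ, eq_comm]
  rw [gradientIdeal, hrange]
  exact hΩ

lemma X_mem_radical_gradientIdeal {d : ℕ} (hΩ : HasIsolatedSingularity Ω)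
    (hhom : Ω.IsHomogeneous d) (i : Fin 3) : X i ∈ (gradientIdeal Ω).radical :=
  have := hΩ.finiteDimensional_quotient_gradientIdeal
  X_mem_radical_of_isIntegral_quotient (isHomogeneous_gradientIdeal hhom) i

end HasIsolatedSingularity

section Descent

open MvPolynomial

variable {R : Type*} [CommRing R] [IsDomain R] {W : MvPolynomial (Fin 3) R} {d n : ℕ} {c : R}
  {f : Fin 3 → MvPolynomial (Fin 3) R}

-- The bracket has degree at most `2 * (n + 1) + (d - 1)`, less than `(d - 1) * (n + 2)` as `d ≥ 4`.
lemma dvd_aeval_homogeneousComponent_pderiv (hW : W.IsHomogeneous d) (hW0 : W ≠ 0) (hd : 4 ≤ d)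
    (hf : ∀ i, (f i).totalDegree ≤ n + 2) (i : Fin 3)
    (hdvd : W - C c ∣ aeval f (pderiv i W) - jacBracket W (f (i + 1)) (f (i + 2))) :
    W ∣ aeval (fun j => homogeneousComponent (n + 2) (f j)) (pderiv i W) := by
  have hpW : (aeval f (pderiv i W)).totalDegree ≤ (d - 1) * (n + 2) :=
    (totalDegree_aeval_le hf _).trans (Nat.mul_le_mul_right _ hW.pderiv.totalDegree_le)
  have hjac : (jacBracket W (f (i + 1)) (f (i + 2))).totalDegree < (d - 1) * (n + 2) :=
    calc (jacBracket W (f (i + 1)) (f (i + 2))).totalDegree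
        ≤ (n + 1) + (n + 1) + (d - 1) := by
          have hle := totalDegree_jacBracket_le W (f (i + 1)) (f (i + 2))
          have h₁ := hf (i + 1)
          have h₂ := hf (i + 2)
          have h₃ := hW.totalDegree_le
          omega
      _ < (d - 1) * (n + 2) := by
          obtain ⟨e, rfl⟩ := Nat.exists_eq_add_of_le' hd
          rw [show e + 4 - 1 = e + 3 by rfl]
          nlinarith
  have hlead := dvd_homogeneousComponent_of_sub_C_dvd hW hW0 (by omega) hdvd
    ((totalDegree_sub _ _).trans (max_le hpW hjac.le))
  rwa [map_sub, homogeneousComponent_eq_zero _ _ hjac, sub_zero,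
    homogeneousComponent_aeval_of_totalDegree_le hW.pderiv hf] at hlead

lemma exists_totalDegree_le_of_jacBracket_dvd [UniqueFactorizationMonoid R]
    (hW : W.IsHomogeneous d) (hd : 4 ≤ d) (hX : ∀ i, X i ∈ (gradientIdeal W).radical)
    (hf : ∀ i, (f i).totalDegree ≤ n + 2)
    (hdvd : ∀ i j, W - C c ∣ aeval f (jacBracket W (X i) (X j)) - jacBracket W (f i) (f j))
    (i : Fin 3) : ∃ p : MvPolynomial (Fin 3) R, p.totalDegree ≤ n + 1 ∧ W - C c ∣ f i - p := by
  have hW0 : W ≠ 0 := (squarefree_of_X_mem_radical_gradientIdeal hX).ne_zero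
  refine exists_totalDegree_le_of_dvd_homogeneousComponent hW hW0 (by omega) c (hf i) ?_
  refine dvd_of_forall_dvd_aeval_pderiv (f := fun j => homogeneousComponent (n + 2) (f j)) hX
    (fun j => ?_) i
  refine dvd_aeval_homogeneousComponent_pderiv hW hW0 hd hf j (c := c) ?_
  simpa only [jacBracket_X_add_one_X_add_two] using hdvd (j + 1) (j + 2)

end Descent

section AlgHom

open MvPolynomial

lemma surjective_of_injective_of_adjoin_eq_top {K A : Type*} [CommRing K] [Ring A] [Algebra K A]
    {V : Submodule K A} [IsArtinian K V] (hV : Algebra.adjoin K (V : Set A) = ⊤) {g : A →ₐ[K] A}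
    (hg : Function.Injective g) (hgV : ∀ v ∈ V, g v ∈ V) : Function.Surjective g := by
  have hsurj : Function.Surjective (g.toLinearMap.restrict hgV) :=
    IsArtinian.surjective_of_injective_endomorphism _ fun u v huv =>
      Subtype.ext (hg (congrArg Subtype.val huv))
  have hle : (V : Set A) ⊆ g.range := fun v hv => by
    obtain ⟨u, hu⟩ := hsurj ⟨v, hv⟩
    exact ⟨u, congrArg Subtype.val hu⟩
  rw [← AlgHom.range_eq_top, ← top_le_iff, ← hV]
  exact Algebra.adjoin_le hle

variable {σ K A : Type*} [CommRing K] [CommRing A] [Algebra K A]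
  {π : MvPolynomial σ K →ₐ[K] A} {g : A →ₐ[K] A} {f : σ → MvPolynomial σ K}

lemma apply_eq_aeval_of_lift (hf : ∀ i, π (f i) = g (π (X i))) (p : MvPolynomial σ K) :
    g (π p) = π (aeval f p) := by
  have h : g.comp π = π.comp (aeval f) := algHom_ext fun i => by simp [hf]
  exact DFunLike.congr_fun h p

lemma surjective_of_lift_totalDegree_le_one [IsArtinianRing K] [Finite σ]
    (hπ : Function.Surjective π) (hg : Function.Injective g) (hf : ∀ i, π (f i) = g (π (X i)))
    (hdeg : ∀ i, (f i).totalDegree ≤ 1) : Function.Surjective g := by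
  let V := (restrictTotalDegree σ K 1).map π.toLinearMap
  have hX : ∀ i, π (X i) ∈ V := fun i =>
    ⟨X i, (mem_restrictTotalDegree σ 1 _).2 (isHomogeneous_X K i).totalDegree_le, rfl⟩
  have hV : Algebra.adjoin K (V : Set A) = ⊤ := by
    rw [← top_le_iff, ← (AlgHom.range_eq_top π).2 hπ, ← Algebra.map_top, ← adjoin_range_X,
      AlgHom.map_adjoin, ← Set.range_comp]
    exact Algebra.adjoin_mono (Set.range_subset_iff.2 hX)
  refine surjective_of_injective_of_adjoin_eq_top hV hg ?_
  rintro _ ⟨p, hp, rfl⟩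
  have hp' : p.totalDegree ≤ 1 := (mem_restrictTotalDegree σ 1 p).1 hp
  refine ⟨aeval f p, (mem_restrictTotalDegree σ 1 _).2 ?_, (apply_eq_aeval_of_lift hf p).symm⟩
  exact (totalDegree_aeval_le hdeg p).trans (by rwa [mul_one])

end AlgHom

namespace PoissonStructure

variable {R A : Type*} [CommRing R] [CommRing A] [Algebra R A] (P : PoissonStructure R A)

lemma bracket_add_right (a b c : A) :
    P.bracket a (b + c) = P.bracket a b + P.bracket a c := by
  rw [P.antisymm a (b + c), P.add_left, P.antisymm b a, P.antisymm c a]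
  ring

lemma bracket_one_right (a : A) : P.bracket a 1 = 0 := by
  simpa using P.leibniz a 1 1

lemma bracket_one_left (a : A) : P.bracket 1 a = 0 := by
  rw [P.antisymm, bracket_one_right, neg_zero]

end PoissonStructure

section JacobianPresentation

open MvPolynomial

variable {R K A : Type*} [CommRing R] [CommRing K] [CommRing A] [Algebra R A] [Algebra K A]
  {P : PoissonStructure R A} {W : MvPolynomial (Fin 3) K} {c : K}
  {π : MvPolynomial (Fin 3) K →ₐ[K] A}

/-- The map `π` presents the Poisson `R`-algebra `A` as `K[x,y,z]/(W - c)` with the Jacobian bracket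
of potential `W` between the coordinates. The bracket of `A` need not be `K`-bilinear: elements of
`K` are only asked to commute with the coordinates, so that the case of a Poisson algebra `K`
is covered. -/
structure IsJacobianPresentation (P : PoissonStructure R A) (W : MvPolynomial (Fin 3) K) (c : K)
    (π : MvPolynomial (Fin 3) K →ₐ[K] A) : Prop where
  surjective : Function.Surjective π
  eq_zero_iff : ∀ p, π p = 0 ↔ W - C c ∣ p
  bracket_X_algebraMap : ∀ i k, P.bracket (π (X i)) (algebraMap K A k) = 0
  bracket_X_X : ∀ i j, P.bracket (π (X i)) (π (X j)) = π (jacBracket W (X i) (X j))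

lemma bracket_algHom_eq_jacBracket {a : A} {p : MvPolynomial (Fin 3) K}
    (hK : ∀ k, P.bracket a (algebraMap K A k) = 0)
    (hX : ∀ i, P.bracket a (π (X i)) = π (jacBracket W p (X i))) (q : MvPolynomial (Fin 3) K) :
    P.bracket a (π q) = π (jacBracket W p q) := by
  induction q using MvPolynomial.induction_on with
  | C k => rw [jacBracket_C_right, map_zero, ← algebraMap_eq, AlgHom.commutes, hK]
  | add q r hq hr => rw [map_add, P.bracket_add_right, hq, hr, jacBracket_add_right, map_add]
  | mul_X q i hq => rw [map_mul, P.leibniz, hq, hX, jacBracket_mul_right, map_add, map_mul, map_mul]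

namespace IsJacobianPresentation

lemma bracket_eq (h : IsJacobianPresentation P W c π) {p : MvPolynomial (Fin 3) K}
    (hp : ∀ k, P.bracket (π p) (algebraMap K A k) = 0) (q : MvPolynomial (Fin 3) K) :
    P.bracket (π p) (π q) = π (jacBracket W p q) := by
  refine bracket_algHom_eq_jacBracket hp (fun i => ?_) q
  rw [P.antisymm, bracket_algHom_eq_jacBracket (h.bracket_X_algebraMap i) (h.bracket_X_X i),
    ← map_neg, jacBracket_neg_swap]

variable {g : A →ₐ[K] A} {f : Fin 3 → MvPolynomial (Fin 3) K}

lemma dvd_of_lift (h : IsJacobianPresentation P W c π)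
    (hg : ∀ x y, g (P.bracket x y) = P.bracket (g x) (g y))
    (hf : ∀ i, π (f i) = g (π (X i))) (i j : Fin 3) :
    W - C c ∣ aeval f (jacBracket W (X i) (X j)) - jacBracket W (f i) (f j) := by
  have hK : ∀ k, P.bracket (π (f i)) (algebraMap K A k) = 0 := fun k => by
    rw [hf, ← g.commutes, ← hg, h.bracket_X_algebraMap, map_zero]
  rw [← h.eq_zero_iff, map_sub, sub_eq_zero]
  calc π (aeval f (jacBracket W (X i) (X j)))
      = g (P.bracket (π (X i)) (π (X j))) := by rw [h.bracket_X_X, apply_eq_aeval_of_lift hf]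
    _ = P.bracket (π (f i)) (π (f j)) := by rw [hg, hf, hf]
    _ = π (jacBracket W (f i) (f j)) := h.bracket_eq hK (f j)

lemma exists_lift_totalDegree_le_one [IsDomain K] [UniqueFactorizationMonoid K] {d : ℕ}
    (h : IsJacobianPresentation P W c π) (hW : W.IsHomogeneous d) (hd : 4 ≤ d)
    (hX : ∀ i, X i ∈ (gradientIdeal W).radical)
    (hg : ∀ x y, g (P.bracket x y) = P.bracket (g x) (g y)) :
    ∃ f : Fin 3 → MvPolynomial (Fin 3) K,
      (∀ i, π (f i) = g (π (X i))) ∧ ∀ i, (f i).totalDegree ≤ 1 := by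
  have hdescent : ∀ n, ∀ f : Fin 3 → MvPolynomial (Fin 3) K, (∀ i, π (f i) = g (π (X i))) →
      (∀ i, (f i).totalDegree ≤ n + 1) → ∃ f : Fin 3 → MvPolynomial (Fin 3) K,
        (∀ i, π (f i) = g (π (X i))) ∧ ∀ i, (f i).totalDegree ≤ 1 := by
    intro n
    induction n with
    | zero => exact fun f hf hdeg => ⟨f, hf, hdeg⟩
    | succ n ih =>
      intro f hf hdeg
      choose f' hdeg' hdvd using
        exists_totalDegree_le_of_jacBracket_dvd hW hd hX hdeg (h.dvd_of_lift hg hf)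
      refine ih f' (fun i => ?_) hdeg'
      have hzero := (h.eq_zero_iff _).2 (hdvd i)
      rw [map_sub, sub_eq_zero] at hzero
      rw [← hzero, hf]
  choose f hf using fun i => h.surjective (g (π (X i)))
  exact hdescent (Finset.univ.sup fun i => (f i).totalDegree) f hf fun i =>
    (Finset.le_sup (f := fun i => (f i).totalDegree) (Finset.mem_univ i)).trans (Nat.le_succ _)

end IsJacobianPresentation

end JacobianPresentation

open MvPolynomial in
theorem IsJacobianPresentation.surjective_of_injective {R K A : Type*} [CommRing R] [Field K]
    [CommRing A] [Algebra R A] [Algebra K A] {P : PoissonStructure R A}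
    {W : MvPolynomial (Fin 3) K} {c : K} {π : MvPolynomial (Fin 3) K →ₐ[K] A} {g : A →ₐ[K] A}
    {d : ℕ} (h : IsJacobianPresentation P W c π) (hW : W.IsHomogeneous d) (hd : 4 ≤ d)
    (hX : ∀ i, X i ∈ (gradientIdeal W).radical)
    (hg : ∀ x y, g (P.bracket x y) = P.bracket (g x) (g y)) (hinj : Function.Injective g) :
    Function.Surjective g := by
  obtain ⟨f, hf, hdeg⟩ := h.exists_lift_totalDegree_le_one hW hd hX hg
  exact surjective_of_lift_totalDegree_le_one h.surjective hinj hf hdeg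

section BaseChange

open MvPolynomial

variable {σ 𝕜 B : Type*} (K : Type*) [CommRing 𝕜] [CommRing K] [Algebra 𝕜 K] [CommRing B]
  [Algebra 𝕜 B]

/-- The base change `K[σ] → K ⊗ B` of a `𝕜`-algebra homomorphism `φ : 𝕜[σ] → B`, used to present
`K ⊗ B` by generators and relations. -/
noncomputable def baseChangeHom (φ : MvPolynomial σ 𝕜 →ₐ[𝕜] B) :
    MvPolynomial σ K →ₐ[K] K ⊗[𝕜] B :=
  aeval fun i => 1 ⊗ₜ φ (X i)

lemma baseChangeHom_eq_comp (φ : MvPolynomial σ 𝕜 →ₐ[𝕜] B) :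
    baseChangeHom K φ = (Algebra.TensorProduct.map (AlgHom.id K K) φ).comp
      (algebraTensorAlgEquiv 𝕜 K).symm.toAlgHom :=
  algHom_ext fun i => by simp [baseChangeHom]

lemma baseChangeHom_map (φ : MvPolynomial σ 𝕜 →ₐ[𝕜] B) (p : MvPolynomial σ 𝕜) :
    baseChangeHom K φ (map (algebraMap 𝕜 K) p) = 1 ⊗ₜ φ p := by
  simp [baseChangeHom_eq_comp]

lemma baseChangeHom_X (φ : MvPolynomial σ 𝕜 →ₐ[𝕜] B) (i : σ) :
    baseChangeHom K φ (X i) = 1 ⊗ₜ φ (X i) :=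
  aeval_X _ i

lemma baseChangeHom_surjective {φ : MvPolynomial σ 𝕜 →ₐ[𝕜] B} (hφ : Function.Surjective φ) :
    Function.Surjective (baseChangeHom K φ) := by
  rw [baseChangeHom_eq_comp]
  exact (LinearMap.lTensor_surjective K (g := φ.toLinearMap) hφ).comp
    (algebraTensorAlgEquiv 𝕜 K).symm.surjective

lemma baseChangeHom_eq_zero_iff {φ : MvPolynomial σ 𝕜 →ₐ[𝕜] B} (hφ : Function.Surjective φ)
    {p : MvPolynomial σ 𝕜} (hker : RingHom.ker φ = Ideal.span {p}) (q : MvPolynomial σ K) :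
    baseChangeHom K φ q = 0 ↔ map (algebraMap 𝕜 K) p ∣ q := by
  constructor
  · intro hq
    rw [baseChangeHom_eq_comp] at hq
    have hmem : (algebraTensorAlgEquiv 𝕜 K).symm q ∈
        RingHom.ker (Algebra.TensorProduct.map (AlgHom.id 𝕜 K) φ) := hq
    rw [Algebra.TensorProduct.lTensor_ker _ hφ, hker, Ideal.map_span, Set.image_singleton,
      Ideal.mem_span_singleton] at hmem
    simpa using map_dvd (algebraTensorAlgEquiv (σ := σ) 𝕜 K) hmem
  · rintro ⟨r, rfl⟩
    have hp : φ p = 0 := by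
      rw [← RingHom.mem_ker, hker]
      exact Ideal.mem_span_singleton_self p
    rw [map_mul, baseChangeHom_map, hp, TensorProduct.tmul_zero, zero_mul]

end BaseChange

namespace PQuot

open MvPolynomial

variable {𝕜 : Type*} [CommRing 𝕜] (Ω : MvPolynomial (Fin 3) 𝕜) (ξ : 𝕜)

/-- The projection `PQuot.mk` as an algebra homomorphism, so that it can be base changed. -/
noncomputable def mkₐ : MvPolynomial (Fin 3) 𝕜 →ₐ[𝕜] PQuot 𝕜 Ω ξ :=
  Ideal.Quotient.mkₐ 𝕜 (Ideal.span {Ω - C ξ})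

lemma mkₐ_apply (p : MvPolynomial (Fin 3) 𝕜) : mkₐ Ω ξ p = mk Ω ξ p := rfl

lemma mkₐ_surjective : Function.Surjective (mkₐ Ω ξ) :=
  Ideal.Quotient.mkₐ_surjective 𝕜 _

lemma ker_mkₐ : RingHom.ker (mkₐ Ω ξ) = Ideal.span {Ω - C ξ} :=
  Ideal.Quotient.mkₐ_ker 𝕜 _

end PQuot

open MvPolynomial in
theorem isJacobianPresentation_baseChange {𝕜 K : Type*} [CommRing 𝕜] [CommRing K] [Algebra 𝕜 K]
    (PK : PoissonStructure 𝕜 K) {Ω : MvPolynomial (Fin 3) 𝕜} {ξ : 𝕜}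
    {P : PoissonStructure 𝕜 (PQuot 𝕜 Ω ξ)} (hP : IsInducedBracket Ω ξ P)
    {PT : PoissonStructure 𝕜 (K ⊗[𝕜] PQuot 𝕜 Ω ξ)} (hPT : IsTensorBracket PK P PT) :
    IsJacobianPresentation PT (map (algebraMap 𝕜 K) Ω) (algebraMap 𝕜 K ξ)
      (baseChangeHom K (PQuot.mkₐ Ω ξ)) where
  surjective := baseChangeHom_surjective K (PQuot.mkₐ_surjective Ω ξ)
  eq_zero_iff p := by
    rw [baseChangeHom_eq_zero_iff K (PQuot.mkₐ_surjective Ω ξ) (PQuot.ker_mkₐ Ω ξ), map_sub, map_C]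
  bracket_X_algebraMap i k := by
    rw [baseChangeHom_X, Algebra.TensorProduct.algebraMap_apply, Algebra.algebraMap_self_apply,
      hPT, PK.bracket_one_left, P.bracket_one_right, TensorProduct.zero_tmul,
      TensorProduct.tmul_zero, zero_add]
  bracket_X_X i j := by
    rw [baseChangeHom_X, baseChangeHom_X, hPT, PK.bracket_one_left, TensorProduct.zero_tmul,
      zero_add, mul_one, PQuot.mkₐ_apply, PQuot.mkₐ_apply, hP, ← PQuot.mkₐ_apply,
      ← baseChangeHom_map, map_jacBracket, map_X, map_X]

theorem baseChange_potential_injective_endo_bijective_general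
    {𝕜 K : Type*} [Field 𝕜] [Field K] [Algebra 𝕜 K] (PK : PoissonStructure 𝕜 K)
    (Ω : MvPolynomial (Fin 3) 𝕜) (d : ℕ) (hhom : Ω.IsHomogeneous d) (hd : 4 ≤ d)
    (hiso : HasIsolatedSingularity Ω) (ξ : 𝕜)
    (P : PoissonStructure 𝕜 (PQuot 𝕜 Ω ξ)) (hP : IsInducedBracket Ω ξ P)
    (PT : PoissonStructure 𝕜 (K ⊗[𝕜] PQuot 𝕜 Ω ξ)) (hPT : IsTensorBracket PK P PT)
    (g : (K ⊗[𝕜] PQuot 𝕜 Ω ξ) →ₐ[K] K ⊗[𝕜] PQuot 𝕜 Ω ξ)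
    (hg : ∀ x y, g (PT.bracket x y) = PT.bracket (g x) (g y))
    (hginj : Function.Injective g) :
    Function.Bijective g :=
  ⟨hginj, (isJacobianPresentation_baseChange PK hP hPT).surjective_of_injective
    (hhom.map (algebraMap 𝕜 K)) hd
    (fun i => X_mem_radical_gradientIdeal_map (algebraMap 𝕜 K)
      (hiso.X_mem_radical_gradientIdeal hhom i))
    hg hginj⟩

/-- Lemma 3.4: for an i.s. potential `Ω` of degree `≥ 4` and a Poisson field `K`, every
injective bracket-preserving `K`-algebra endomorphism of `K ⊗ P_{Ω-ξ}` is bijective. -/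
theorem baseChange_potential_injective_endo_bijective
    {𝕜 K : Type*} [Field 𝕜] [IsAlgClosed 𝕜] [CharZero 𝕜]
    [Field K] [Algebra 𝕜 K] (PK : PoissonStructure 𝕜 K)
    (Ω : MvPolynomial (Fin 3) 𝕜) (d : ℕ) (hhom : Ω.IsHomogeneous d) (hd : 4 ≤ d)
    (hiso : HasIsolatedSingularity Ω) (ξ : 𝕜)
    (P : PoissonStructure 𝕜 (PQuot 𝕜 Ω ξ)) (hP : IsInducedBracket Ω ξ P)
    (PT : PoissonStructure 𝕜 (K ⊗[𝕜] PQuot 𝕜 Ω ξ)) (hPT : IsTensorBracket PK P PT)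
    (g : (K ⊗[𝕜] PQuot 𝕜 Ω ξ) →ₐ[K] K ⊗[𝕜] PQuot 𝕜 Ω ξ)
    (hg : ∀ x y, g (PT.bracket x y) = PT.bracket (g x) (g y))
    (hginj : Function.Injective g) :
    Function.Bijective g :=
  baseChange_potential_injective_endo_bijective_general PK Ω d hhom hd hiso ξ P hP PT hPT g hg hginj
end
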